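/- arXiv:1504.02625 — 2 statements merged into one kernel-verified Lean document; each statement's English description precedes it below -/
import Mathlib

section
/- The spectrum of the partial integral operator T = T₁ + T₂ with degenerate kernels satisfies σ(T₁ + T₂) = {0} ∪ (⋃_{i=1}^n Essran(h_i)) ∪ (⋃_{j=1}^m Essran(p_j)) ∪ D₀(T). -/
open MeasureTheory Complex

noncomputable section

/-- The measure on `ℝ` given by restricting Lebesgue measure to `[a,b]`. -/
abbrev muI (a b : ℝ) : MeasureTheory.Measure ℝ :=
  MeasureTheory.volume.restrict (Set.Icc a b)

/-- The essential range of a function `φ` with respect to a measure `μ` on `ℝ`. -/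
def Essran (μ : MeasureTheory.Measure ℝ) (φ : ℝ → ℝ) : Set ℝ :=
  {l : ℝ | ∀ ε > 0, 0 < μ {ξ : ℝ | l - ε < φ ξ ∧ φ ξ < l + ε}}

/-!
Embedding `L²` of the second variable into `H` by `v ↦ φ k ⊗ v` gives isometries with pairwise
orthogonal ranges, on which `T₁` acts as multiplication by `h k`; it vanishes on the orthogonal
complement of all these ranges. Hence `σ(T₁)` is contained in `{0} ∪ ⋃ Essran (h k)`, and likewise
for `T₂`. As the measures are atomless, a point of `Essran (h i)` has approximate eigenvectors `v`
orthogonal to the finitely many `ψ j`; then `T₂ (φ i ⊗ v) = 0`, so `φ i ⊗ v` are approximate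
eigenvectors of `T₁ + T₂`. A pure tensor orthogonal to all `φ k` and all `ψ j` in its two factors
lies in the kernel of `T₁ + T₂`.

Off the set `{0} ∪ ⋃ Essran (h k) ∪ ⋃ Essran (p j)` one has
`1 - τ(T₁ + T₂) = (1 - τT₁)(1 - τT₂)(1 - τ²W₁(τ))`, where `W₁(τ)` is compact because `T₁T₂` is
a finite sum of products containing rank-one operators `(φ k ⊗ ·)† (· ⊗ ψ j)`, so the Fredholm
alternative decides whether `1/τ` belongs to the spectrum.
-/

section Operators

theorem inv_mem_resolventSet_iff {𝕜 A : Type*} [Field 𝕜] [Ring A] [Algebra 𝕜 A] {a : A} {τ : 𝕜}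
    (hτ : τ ≠ 0) : τ⁻¹ ∈ resolventSet 𝕜 a ↔ IsUnit (1 - τ • a) := by
  have factor : 1 - τ • a = Units.mk0 τ hτ • (algebraMap 𝕜 A τ⁻¹ - a) := by
    rw [Units.smul_def, Units.val_mk0, smul_sub, Algebra.algebraMap_eq_smul_one, smul_smul,
      mul_inv_cancel₀ hτ, one_smul]
  rw [factor, isUnit_smul_iff, spectrum.mem_resolventSet_iff]

theorem one_sub_smul_add_eq_mul {R A : Type*} [CommRing R] [Ring A] [Algebra R A] {τ : R}
    {a b s w : A} (hs : (1 - τ • a) * s = a) (hw : (1 - τ • b) * w = s * b) :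
    1 - τ • (a + b) = (1 - τ • a) * (1 - τ • b) * (1 - τ ^ 2 • w) := by
  have key : (1 - τ • a) * (1 - τ • b) * w = a * b := by
    rw [mul_assoc, hw, ← mul_assoc, hs]
  calc 1 - τ • (a + b) = (1 - τ • a) * (1 - τ • b) - τ ^ 2 • (a * b) := by
        simp only [sub_mul, mul_sub, one_mul, mul_one, smul_mul_assoc, mul_smul_comm]
        module
    _ = (1 - τ • a) * (1 - τ • b) * (1 - τ ^ 2 • w) := by
        rw [mul_sub (_ * _), mul_one, mul_smul_comm, key]

variable {𝕜 E : Type*} [NontriviallyNormedField 𝕜] [NormedAddCommGroup E] [NormedSpace 𝕜 E]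

theorem mem_spectrum_of_forall_exists_norm_sub_le {T : E →L[𝕜] E} {l : 𝕜}
    (hT : ∀ ε > 0, ∃ f : E, f ≠ 0 ∧ ‖T f - l • f‖ ≤ ε * ‖f‖) : l ∈ spectrum 𝕜 T := by
  rintro ⟨u, hu⟩
  set R : E →L[𝕜] E := ↑u⁻¹
  obtain ⟨f, hf, hle⟩ := hT (‖R‖ + 1)⁻¹ (by positivity)
  have hRf : R (l • f - T f) = f := by
    have inv_apply := congrArg (fun Z : E →L[𝕜] E ↦ Z f) u.inv_mul
    rw [hu] at inv_apply
    simpa [Algebra.algebraMap_eq_smul_one] using inv_apply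
  have hf_pos : 0 < ‖f‖ := norm_pos_iff.2 hf
  have : ‖f‖ < ‖f‖ := calc
    ‖f‖ = ‖R (l • f - T f)‖ := by rw [hRf]
    _ ≤ ‖R‖ * ((‖R‖ + 1)⁻¹ * ‖f‖) :=
        (R.le_opNorm _).trans (by rw [norm_sub_rev]; gcongr)
    _ = ‖R‖ / (‖R‖ + 1) * ‖f‖ := by rw [← mul_assoc, ← div_eq_mul_inv]
    _ < 1 * ‖f‖ :=
        mul_lt_mul_of_pos_right ((div_lt_one (by positivity)).2 (lt_add_one _)) hf_pos
    _ = ‖f‖ := one_mul _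
  exact this.false

variable {T₁ T₂ S W : E →L[𝕜] E} {τ : 𝕜}

theorem isCompactOperator_of_one_sub_smul_mul_eq (hT : IsCompactOperator (T₁ * T₂))
    (h₁ : IsUnit (1 - τ • T₁)) (h₂ : IsUnit (1 - τ • T₂)) (hS : (1 - τ • T₁) * S = T₁)
    (hW : (1 - τ • T₂) * W = S * T₂) : IsCompactOperator W := by
  obtain ⟨u₁, hu₁⟩ := h₁
  obtain ⟨u₂, hu₂⟩ := h₂
  have hW' : W = (↑u₂⁻¹ * ↑u₁⁻¹ : E →L[𝕜] E) * (T₁ * T₂) := by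
    rw [mul_assoc, ← mul_assoc _ T₁ T₂, (Units.inv_mul_eq_iff_eq_mul u₁).2 (hu₁ ▸ hS.symm), ← hW,
      ← hu₂, Units.inv_mul_cancel_left]
  rw [hW']
  exact IsCompactOperator.clm_comp hT (↑u₂⁻¹ * ↑u₁⁻¹ : E →L[𝕜] E)

variable [CompleteSpace E]

theorem inv_mem_spectrum_add_iff (hT : IsCompactOperator (T₁ * T₂)) (hτ : τ ≠ 0)
    (h₁ : τ⁻¹ ∈ resolventSet 𝕜 T₁) (h₂ : τ⁻¹ ∈ resolventSet 𝕜 T₂) (hS : (1 - τ • T₁) * S = T₁)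
    (hW : (1 - τ • T₂) * W = S * T₂) :
    τ⁻¹ ∈ spectrum 𝕜 (T₁ + T₂) ↔ ∃ g ≠ 0, (τ ^ 2 • W) g = g := by
  rw [inv_mem_resolventSet_iff hτ] at h₁ h₂
  have hK : IsCompactOperator (τ ^ 2 • W) :=
    (isCompactOperator_of_one_sub_smul_mul_eq hT h₁ h₂ hS hW).smul (τ ^ 2)
  have spectrum_iff : τ⁻¹ ∈ spectrum 𝕜 (T₁ + T₂) ↔ 1 ∈ spectrum 𝕜 (τ ^ 2 • W) := by
    rw [spectrum.mem_iff, spectrum.mem_iff, ← spectrum.mem_resolventSet_iff,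
      inv_mem_resolventSet_iff hτ, one_sub_smul_add_eq_mul hS hW, (h₁.mul h₂).mul_left_iff, map_one]
  rw [spectrum_iff, ← hK.hasEigenvalue_iff_mem_spectrum one_ne_zero]
  constructor
  · intro h
    obtain ⟨g, hg⟩ := h.exists_hasEigenvector
    exact ⟨g, hg.2, by simpa using hg.apply_eq_smul⟩
  · rintro ⟨g, hg, hWg⟩
    exact Module.End.hasEigenvalue_of_hasEigenvector (x := g)
      ⟨Module.End.mem_eigenspace_iff.2 (by simpa using hWg), hg⟩

theorem spectrum_add_eq_union {S W : 𝕜 → E →L[𝕜] E} {E₀ : Set 𝕜} (hT : IsCompactOperator (T₁ * T₂))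
    (h0 : 0 ∈ E₀) (h₁ : spectrum 𝕜 T₁ ⊆ E₀) (h₂ : spectrum 𝕜 T₂ ⊆ E₀)
    (hE₀ : E₀ ⊆ spectrum 𝕜 (T₁ + T₂))
    (hS : ∀ τ, τ ≠ 0 → τ⁻¹ ∈ resolventSet 𝕜 T₁ → τ⁻¹ ∈ resolventSet 𝕜 T₂ →
      (1 - τ • T₁) * S τ = T₁)
    (hW : ∀ τ, τ ≠ 0 → τ⁻¹ ∈ resolventSet 𝕜 T₁ → τ⁻¹ ∈ resolventSet 𝕜 T₂ →
      (1 - τ • T₂) * W τ = S τ * T₂) :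
    spectrum 𝕜 (T₁ + T₂) = E₀ ∪ (fun τ ↦ τ⁻¹) '' {τ | τ ≠ 0 ∧ τ⁻¹ ∈ resolventSet 𝕜 T₁ ∧
      τ⁻¹ ∈ resolventSet 𝕜 T₂ ∧ ∃ g ≠ 0, (τ ^ 2 • W τ) g = g} := by
  apply Set.Subset.antisymm
  · intro l hl
    by_cases hl₀ : l ∈ E₀
    · exact .inl hl₀
    have hτ : l⁻¹ ≠ 0 := inv_ne_zero (ne_of_mem_of_not_mem h0 hl₀).symm
    have hl₁ : l⁻¹⁻¹ ∈ resolventSet 𝕜 T₁ := by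
      rw [inv_inv]; exact not_not.1 fun h ↦ hl₀ (h₁ h)
    have hl₂ : l⁻¹⁻¹ ∈ resolventSet 𝕜 T₂ := by
      rw [inv_inv]; exact not_not.1 fun h ↦ hl₀ (h₂ h)
    refine .inr ⟨l⁻¹, ⟨hτ, hl₁, hl₂, ?_⟩, inv_inv l⟩
    rwa [← inv_mem_spectrum_add_iff hT hτ hl₁ hl₂ (hS _ hτ hl₁ hl₂) (hW _ hτ hl₁ hl₂), inv_inv]
  · rintro _ (hl | ⟨τ, ⟨hτ, h₁τ, h₂τ, hg⟩, rfl⟩)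
    · exact hE₀ hl
    · exact (inv_mem_spectrum_add_iff hT hτ h₁τ h₂τ (hS τ hτ h₁τ h₂τ) (hW τ hτ h₁τ h₂τ)).2 hg

end Operators

section BlockDiag

open ContinuousLinearMap

variable {ι Y H : Type*} [NormedAddCommGroup Y] [InnerProductSpace ℂ Y]
  [CompleteSpace Y] [NormedAddCommGroup H] [InnerProductSpace ℂ H] [CompleteSpace H]

/-- The operators `J k` are isometries with pairwise orthogonal ranges. -/
def IsOrthonormalEmbedding [DecidableEq ι] (J : ι → Y →L[ℂ] H) : Prop :=
  ∀ i j v, adjoint (J i) (J j v) = if i = j then v else 0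

variable [DecidableEq ι] {J : ι → Y →L[ℂ] H}

theorem IsOrthonormalEmbedding.norm_apply (hJ : IsOrthonormalEmbedding J) (i : ι) (v : Y) :
    ‖J i v‖ = ‖v‖ := by
  rw [@norm_eq_sqrt_re_inner ℂ, ← adjoint_inner_right, hJ, if_pos rfl, ← @norm_eq_sqrt_re_inner ℂ]

variable [Fintype ι]

/-- The operator on `H` acting as `A k` on the range of `J k`, for `J k : Y → H` isometries with
pairwise orthogonal ranges, and as zero on the orthogonal complement of all ranges. -/
def blockDiag (J : ι → Y →L[ℂ] H) (A : ι → Y →L[ℂ] Y) : H →L[ℂ] H :=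
  ∑ k, J k ∘L A k ∘L adjoint (J k)

omit [DecidableEq ι] in
theorem blockDiag_apply (J : ι → Y →L[ℂ] H) (A : ι → Y →L[ℂ] Y) (f : H) :
    blockDiag J A f = ∑ k, J k (A k (adjoint (J k) f)) := by
  simp [blockDiag, sum_apply]

theorem IsOrthonormalEmbedding.blockDiag_apply_apply (hJ : IsOrthonormalEmbedding J)
    (A : ι → Y →L[ℂ] Y) (i : ι) (v : Y) : blockDiag J A (J i v) = J i (A i v) := by
  rw [blockDiag_apply, Finset.sum_eq_single i] <;> simp +contextual [hJ _ _ _]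

/-- `blockDiag J` as an algebra homomorphism; it is not unital, since the ranges of the `J k` need
not span `H`. -/
def blockDiagHom (hJ : IsOrthonormalEmbedding J) : (ι → Y →L[ℂ] Y) →ₙₐ[ℂ] (H →L[ℂ] H) where
  toFun := blockDiag J
  map_smul' c A := by simp [blockDiag, Finset.smul_sum]
  map_zero' := by simp [blockDiag]
  map_add' A B := by simp [blockDiag, Finset.sum_add_distrib]
  map_mul' A B := by
    ext f
    simp [blockDiag_apply J (A * B), blockDiag_apply J B, hJ.blockDiag_apply_apply]

theorem spectrum_blockDiag_subset (hJ : IsOrthonormalEmbedding J) (A : ι → Y →L[ℂ] Y) :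
    spectrum ℂ (blockDiag J A) ⊆ {0} ∪ ⋃ k, spectrum ℂ (A k) := by
  have h := NonUnitalAlgHom.quasispectrum_apply_subset (R := ℂ) (blockDiagHom hJ) A
  rw [quasispectrum_eq_spectrum_union_zero, quasispectrum_eq_spectrum_union_zero,
    Pi.spectrum_eq, Set.union_comm (⋃ k, _)] at h
  exact Set.subset_union_left.trans h

theorem one_sub_smul_blockDiag_mul (hJ : IsOrthonormalEmbedding J) {A S : ι → Y →L[ℂ] Y} {τ : ℂ}
    (hS : ∀ k, (1 - τ • A k) * S k = A k) :
    (1 - τ • blockDiag J A) * blockDiag J S = blockDiag J A := by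
  have h : S - τ • (A * S) = A := funext fun k ↦ by
    simpa [sub_mul] using hS k
  calc (1 - τ • blockDiag J A) * blockDiag J S
      = blockDiagHom hJ (S - τ • (A * S)) := by
        rw [map_sub, map_smul, map_mul, sub_mul, one_mul, smul_mul_assoc]; rfl
    _ = blockDiag J A := by rw [h]; rfl

end BlockDiag

section LeftEssentialSpectrum

variable {Y : Type*} [NormedAddCommGroup Y] [InnerProductSpace ℂ Y]

/-- The left essential spectrum of `A`: the scalars `l` having approximate eigenvectors orthogonal
to any prescribed finite-dimensional subspace. -/
def leftEssentialSpectrum (A : Y →L[ℂ] Y) : Set ℂ :=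
  {l | ∀ F : Submodule ℂ Y, FiniteDimensional ℂ F → ∀ ε > 0,
    ∃ v ∈ Fᗮ, v ≠ 0 ∧ ‖A v - l • v‖ ≤ ε * ‖v‖}

end LeftEssentialSpectrum

section HilbertTensor

open ContinuousLinearMap

variable {ι κ X Y H : Type*} [NormedAddCommGroup X] [InnerProductSpace ℂ X]
  [NormedAddCommGroup Y] [InnerProductSpace ℂ Y]
  [NormedAddCommGroup H] [InnerProductSpace ℂ H]

theorem isCompactOperator_rankOne (v : Y) (u : X) :
    IsCompactOperator (InnerProductSpace.rankOne ℂ v u) :=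
  IsCompactOperator.clm_comp (isCompactOperator_of_locallyCompactSpace_dom (innerSL ℂ u))
    (toSpanSingleton ℂ v)

/-- A bounded bilinear map `t` which multiplies inner products, so that `t u v` behaves as the pure
tensor `u ⊗ v` of a Hilbert space tensor product. -/
def IsHilbertTensor (t : X →L[ℂ] Y →L[ℂ] H) : Prop :=
  ∀ u v u' v', inner ℂ (t u v) (t u' v') = inner ℂ u u' * inner ℂ v v'

variable {t : X →L[ℂ] Y →L[ℂ] H}

theorem IsHilbertTensor.flip (ht : IsHilbertTensor t) : IsHilbertTensor t.flip :=
  fun v u v' u' ↦ by rw [flip_apply, flip_apply, ht, mul_comm]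

theorem IsHilbertTensor.ne_zero (ht : IsHilbertTensor t) {u : X} {v : Y} (hu : u ≠ 0)
    (hv : v ≠ 0) : t u v ≠ 0 := by
  rw [← inner_self_ne_zero (𝕜 := ℂ), ht]
  exact mul_ne_zero (inner_self_ne_zero.2 hu) (inner_self_ne_zero.2 hv)

variable [CompleteSpace Y] [CompleteSpace H]

theorem IsHilbertTensor.adjoint_apply (ht : IsHilbertTensor t) (u u' : X) (v : Y) :
    adjoint (t u) (t u' v) = inner ℂ u u' • v :=
  ext_inner_left ℂ fun w ↦ by rw [adjoint_inner_right, ht, inner_smul_right]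

theorem IsHilbertTensor.isOrthonormalEmbedding [DecidableEq ι] (ht : IsHilbertTensor t)
    {φ : ι → X} (hφ : Orthonormal ℂ φ) : IsOrthonormalEmbedding fun k ↦ t (φ k) := fun i j v ↦ by
  rw [ht.adjoint_apply, orthonormal_iff_ite.1 hφ, ite_smul, one_smul, zero_smul]

theorem IsHilbertTensor.blockDiag_apply_eq_zero [Fintype ι] (ht : IsHilbertTensor t) {φ : ι → X}
    (A : ι → Y →L[ℂ] Y) {u : X} (hu : u ∈ (Submodule.span ℂ (Set.range φ))ᗮ) (v : Y) :
    blockDiag (fun k ↦ t (φ k)) A (t u v) = 0 := by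
  have hφu (k : ι) : inner ℂ (φ k) u = 0 :=
    Submodule.inner_right_of_mem_orthogonal (Submodule.subset_span (Set.mem_range_self k)) hu
  simp [blockDiag_apply, ht.adjoint_apply, hφu]

theorem IsHilbertTensor.adjoint_comp_flip (ht : IsHilbertTensor t) (u : X) (v : Y) :
    adjoint (t u) ∘L t.flip v = InnerProductSpace.rankOne ℂ v u := by
  ext w
  simp [ht.adjoint_apply]

variable [CompleteSpace X] [Fintype ι] [Fintype κ]

theorem IsHilbertTensor.zero_mem_spectrum_add (ht : IsHilbertTensor t) {φ : ι → X} {ψ : κ → Y}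
    (A : ι → Y →L[ℂ] Y) (B : κ → X →L[ℂ] X)
    (hφ : (Submodule.span ℂ (Set.range φ))ᗮ ≠ ⊥) (hψ : (Submodule.span ℂ (Set.range ψ))ᗮ ≠ ⊥) :
    0 ∈ spectrum ℂ (blockDiag (fun k ↦ t (φ k)) A + blockDiag (fun j ↦ t.flip (ψ j)) B) := by
  obtain ⟨u, hu, hu₀⟩ := Submodule.exists_mem_ne_zero_of_ne_bot hφ
  obtain ⟨v, hv, hv₀⟩ := Submodule.exists_mem_ne_zero_of_ne_bot hψ
  have hker : blockDiag (fun k ↦ t (φ k)) A (t u v) +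
      blockDiag (fun j ↦ t.flip (ψ j)) B (t u v) = 0 := by
    rw [ht.blockDiag_apply_eq_zero A hu, zero_add]
    exact ht.flip.blockDiag_apply_eq_zero B hv u
  refine mem_spectrum_of_forall_exists_norm_sub_le fun ε hε ↦ ?_
  refine ⟨t u v, ht.ne_zero hu₀ hv₀, ?_⟩
  rw [add_apply, hker, zero_smul, sub_zero, norm_zero]
  positivity

/-- Approximate eigenvectors `v` of `A i` orthogonal to all `ψ j` yield approximate eigenvectors
`φ i ⊗ v` of the sum, since the second summand vanishes on them. -/
theorem IsHilbertTensor.leftEssentialSpectrum_subset (ht : IsHilbertTensor t) {φ : ι → X}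
    (hφ : Orthonormal ℂ φ) (ψ : κ → Y) (A : ι → Y →L[ℂ] Y) (B : κ → X →L[ℂ] X) (i : ι) :
    leftEssentialSpectrum (A i) ⊆
      spectrum ℂ (blockDiag (fun k ↦ t (φ k)) A + blockDiag (fun j ↦ t.flip (ψ j)) B) := by
  classical
  intro l hl
  have hJ := ht.isOrthonormalEmbedding hφ
  refine mem_spectrum_of_forall_exists_norm_sub_le fun ε hε ↦ ?_
  obtain ⟨v, hvψ, hv₀, hv⟩ := hl _ (.span_of_finite ℂ (Set.finite_range ψ)) ε hε
  refine ⟨t (φ i) v, ht.ne_zero (hφ.ne_zero i) hv₀, ?_⟩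
  have hB : blockDiag (fun j ↦ t.flip (ψ j)) B (t (φ i) v) = 0 :=
    ht.flip.blockDiag_apply_eq_zero B hvψ (φ i)
  rw [add_apply, hJ.blockDiag_apply_apply A i v, hB, add_zero, ← map_smul, ← map_sub]
  rwa [hJ.norm_apply i, hJ.norm_apply i]

theorem IsHilbertTensor.leftEssentialSpectrum_subset_spectrum_blockDiag (ht : IsHilbertTensor t)
    {φ : ι → X} (hφ : Orthonormal ℂ φ) (A : ι → Y →L[ℂ] Y) (i : ι) :
    leftEssentialSpectrum (A i) ⊆ spectrum ℂ (blockDiag (fun k ↦ t (φ k)) A) := by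
  simpa [blockDiag] using
    ht.leftEssentialSpectrum_subset hφ (Fin.elim0 : Fin 0 → Y) A Fin.elim0 i

/-- The cross terms of the product factor through the rank-one operators `(φ k ⊗ ·)† (· ⊗ ψ j)`. -/
theorem IsHilbertTensor.isCompactOperator_blockDiag_mul (ht : IsHilbertTensor t) (φ : ι → X)
    (ψ : κ → Y) (A : ι → Y →L[ℂ] Y) (B : κ → X →L[ℂ] X) :
    IsCompactOperator
      (blockDiag (fun k ↦ t (φ k)) A * blockDiag (fun j ↦ t.flip (ψ j)) B) := by
  have hsum : blockDiag (fun k ↦ t (φ k)) A * blockDiag (fun j ↦ t.flip (ψ j)) B =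
      ∑ k, ∑ j, (t (φ k) ∘L A k) ∘L InnerProductSpace.rankOne ℂ (ψ j) (φ k) ∘L
        (B j ∘L adjoint (t.flip (ψ j))) := by
    simp only [← ht.adjoint_comp_flip, blockDiag, Finset.sum_mul_sum]
    rfl
  rw [hsum]
  refine Submodule.sum_mem (compactOperator (RingHom.id ℂ) H H) fun k _ ↦
    Submodule.sum_mem _ fun j _ ↦ ?_
  exact ((isCompactOperator_rankOne (ψ j) (φ k)).comp_clm
    (B j ∘L adjoint (t.flip (ψ j)))).clm_comp (t (φ k) ∘L A k)

end HilbertTensor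

section TensorLp

open ContinuousLinearMap

variable {α β : Type*} [MeasurableSpace α] [MeasurableSpace β] {μ : Measure α} {ν : Measure β}

theorem memLp_two_mul_prod {u : α → ℂ} {v : β → ℂ} (hu : MemLp u 2 μ) (hv : MemLp v 2 ν) :
    MemLp (fun z : α × β ↦ u z.1 * v z.2) 2 (μ.prod ν) := by
  refine (memLp_two_iff_integrable_sq_norm (hu.1.comp_fst.mul hv.1.comp_snd)).2 ?_
  simpa [mul_pow] using
    ((memLp_two_iff_integrable_sq_norm hu.1).1 hu).mul_prod
      ((memLp_two_iff_integrable_sq_norm hv.1).1 hv)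

/-- The pure tensor `(x, y) ↦ u x * v y` of two square-integrable functions. -/
def pureTensorLp (u : Lp ℂ 2 μ) (v : Lp ℂ 2 ν) : Lp ℂ 2 (μ.prod ν) :=
  (memLp_two_mul_prod (Lp.memLp u) (Lp.memLp v)).toLp

theorem coeFn_pureTensorLp (u : Lp ℂ 2 μ) (v : Lp ℂ 2 ν) :
    pureTensorLp u v =ᵐ[μ.prod ν] fun z ↦ u z.1 * v z.2 :=
  MemLp.coeFn_toLp _

theorem pureTensorLp_add_left (u u' : Lp ℂ 2 μ) (v : Lp ℂ 2 ν) :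
    pureTensorLp (u + u') v = pureTensorLp u v + pureTensorLp u' v := by
  refine Lp.ext ?_
  filter_upwards [coeFn_pureTensorLp (u + u') v, coeFn_pureTensorLp u v, coeFn_pureTensorLp u' v,
    Lp.coeFn_add (pureTensorLp u v) (pureTensorLp u' v),
    Measure.quasiMeasurePreserving_fst.ae (Lp.coeFn_add u u')] with z h₁ h₂ h₃ h₄ h₅
  simp only [h₁, h₂, h₃, h₄, h₅, Pi.add_apply, add_mul]

theorem pureTensorLp_smul_left (c : ℂ) (u : Lp ℂ 2 μ) (v : Lp ℂ 2 ν) :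
    pureTensorLp (c • u) v = c • pureTensorLp u v := by
  refine Lp.ext ?_
  filter_upwards [coeFn_pureTensorLp (c • u) v, coeFn_pureTensorLp u v,
    Lp.coeFn_smul c (pureTensorLp u v),
    Measure.quasiMeasurePreserving_fst.ae (Lp.coeFn_smul c u)] with z h₁ h₂ h₃ h₄
  simp only [h₁, h₂, h₃, h₄, Pi.smul_apply, smul_mul_assoc]

theorem pureTensorLp_add_right (u : Lp ℂ 2 μ) (v v' : Lp ℂ 2 ν) :
    pureTensorLp u (v + v') = pureTensorLp u v + pureTensorLp u v' := by
  refine Lp.ext ?_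
  filter_upwards [coeFn_pureTensorLp u (v + v'), coeFn_pureTensorLp u v, coeFn_pureTensorLp u v',
    Lp.coeFn_add (pureTensorLp u v) (pureTensorLp u v'),
    Measure.quasiMeasurePreserving_snd.ae (Lp.coeFn_add v v')] with z h₁ h₂ h₃ h₄ h₅
  simp only [h₁, h₂, h₃, h₄, h₅, Pi.add_apply, mul_add]

theorem pureTensorLp_smul_right (c : ℂ) (u : Lp ℂ 2 μ) (v : Lp ℂ 2 ν) :
    pureTensorLp u (c • v) = c • pureTensorLp u v := by
  refine Lp.ext ?_
  filter_upwards [coeFn_pureTensorLp u (c • v), coeFn_pureTensorLp u v,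
    Lp.coeFn_smul c (pureTensorLp u v),
    Measure.quasiMeasurePreserving_snd.ae (Lp.coeFn_smul c v)] with z h₁ h₂ h₃ h₄
  simp only [h₁, h₂, h₃, h₄, Pi.smul_apply, mul_smul_comm]

variable [SFinite μ] [SFinite ν]

theorem inner_pureTensorLp (u : Lp ℂ 2 μ) (v : Lp ℂ 2 ν) (u' : Lp ℂ 2 μ) (v' : Lp ℂ 2 ν) :
    inner ℂ (pureTensorLp u v) (pureTensorLp u' v') = inner ℂ u u' * inner ℂ v v' := by
  rw [L2.inner_def, L2.inner_def, L2.inner_def, ← integral_prod_mul]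
  refine integral_congr_ae ?_
  filter_upwards [coeFn_pureTensorLp u v, coeFn_pureTensorLp u' v'] with z hz hz'
  rw [hz, hz']
  simp only [RCLike.inner_apply, map_mul]
  ring

theorem norm_pureTensorLp (u : Lp ℂ 2 μ) (v : Lp ℂ 2 ν) : ‖pureTensorLp u v‖ = ‖u‖ * ‖v‖ := by
  have h := inner_pureTensorLp u v u v
  simp only [inner_self_eq_norm_sq_to_K] at h
  rw [← sq_eq_sq₀ (norm_nonneg _) (by positivity), mul_pow]
  exact_mod_cast h

variable (μ ν) in
/-- `pureTensorLp` as a bounded bilinear map. -/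
def tensorLp : Lp ℂ 2 μ →L[ℂ] Lp ℂ 2 ν →L[ℂ] Lp ℂ 2 (μ.prod ν) :=
  LinearMap.mkContinuous₂ (LinearMap.mk₂ ℂ pureTensorLp pureTensorLp_add_left
    pureTensorLp_smul_left pureTensorLp_add_right pureTensorLp_smul_right) 1
    fun u v ↦ by rw [LinearMap.mk₂_apply, norm_pureTensorLp, one_mul]

theorem coeFn_tensorLp (u : Lp ℂ 2 μ) (v : Lp ℂ 2 ν) :
    tensorLp μ ν u v =ᵐ[μ.prod ν] fun z ↦ u z.1 * v z.2 :=
  coeFn_pureTensorLp u v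

theorem isHilbertTensor_tensorLp : IsHilbertTensor (tensorLp μ ν) :=
  inner_pureTensorLp

theorem coeFn_tensorLp_toLp {φ : α → ℂ} (hφ : MemLp φ 2 μ) (v : Lp ℂ 2 ν) :
    tensorLp μ ν hφ.toLp v =ᵐ[μ.prod ν] fun z ↦ φ z.1 * v z.2 := by
  filter_upwards [coeFn_tensorLp hφ.toLp v,
    Measure.quasiMeasurePreserving_fst.ae hφ.coeFn_toLp] with z h₁ h₂
  rw [h₁, h₂]

theorem coeFn_tensorLp_flip_toLp {ψ : β → ℂ} (hψ : MemLp ψ 2 ν) (u : Lp ℂ 2 μ) :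
    (tensorLp μ ν).flip hψ.toLp u =ᵐ[μ.prod ν] fun z ↦ ψ z.2 * u z.1 := by
  filter_upwards [coeFn_tensorLp u hψ.toLp,
    Measure.quasiMeasurePreserving_snd.ae hψ.coeFn_toLp] with z h₁ h₂
  rw [flip_apply, h₁, h₂, mul_comm]

end TensorLp

section PartialIntegrals

open ContinuousLinearMap

variable {ι α β : Type*} [MeasurableSpace α] [MeasurableSpace β] {μ : Measure α} {ν : Measure β}

theorem orthonormal_toLp_iff [DecidableEq ι] {φ : ι → α → ℂ} (hφ : ∀ k, MemLp (φ k) 2 μ) :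
    Orthonormal ℂ (fun k ↦ (hφ k).toLp) ↔
      ∀ i j, ∫ x, star (φ i x) * φ j x ∂μ = if i = j then 1 else 0 := by
  have inner_eq (i j : ι) :
      inner ℂ (hφ i).toLp (hφ j).toLp = ∫ x, star (φ i x) * φ j x ∂μ := by
    rw [L2.inner_def]
    refine integral_congr_ae ?_
    filter_upwards [(hφ i).coeFn_toLp, (hφ j).coeFn_toLp] with x hi hj
    rw [hi, hj, RCLike.inner_apply', starRingEnd_apply]
  simp only [orthonormal_iff_ite, inner_eq]

theorem integral_sum_mul_star_mul [Fintype ι] {φ : ι → α → ℂ} (hφ : ∀ k, MemLp (φ k) 2 μ)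
    {f : α → ℂ} (hf : MemLp f 2 μ) (c : ι → ℂ) :
    ∫ s, (∑ k, c k * star (φ k s)) * f s ∂μ = ∑ k, c k * ∫ s, star (φ k s) * f s ∂μ := by
  have hint (k : ι) : Integrable (fun s ↦ c k * (star (φ k s) * f s)) μ :=
    ((hφ k).star.integrable_mul hf).const_mul (c k)
  simp only [Finset.sum_mul, mul_assoc]
  rw [integral_finsetSum _ fun k _ ↦ hint k]
  simp only [integral_const_mul]

theorem ae_eq_of_forall_inner_eq_integral [SigmaFinite ν] {g : Lp ℂ 2 ν} {G : β → ℂ}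
    (hint : ∀ v : Lp ℂ 2 ν, Integrable (fun y ↦ star (v y) * G y) ν)
    (hinner : ∀ v : Lp ℂ 2 ν, inner ℂ v g = ∫ y, star (v y) * G y ∂ν) : g =ᵐ[ν] G := by
  have indicator_mul {s : Set β} (hs : MeasurableSet s) (hνs : ν s < ⊤) :
      (fun y ↦ star (indicatorConstLp 2 hs hνs.ne (1 : ℂ) y) * G y) =ᵐ[ν] s.indicator G := by
    filter_upwards [indicatorConstLp_coeFn (p := 2) (hs := hs) (hμs := hνs.ne) (c := (1 : ℂ))]
      with y hy
    by_cases hys : y ∈ s <;> simp [hy, hys]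
  refine ae_eq_of_forall_setIntegral_eq_of_sigmaFinite
    (fun s _ hνs ↦ integrableOn_Lp_of_measure_ne_top g one_le_two hνs.ne)
    (fun s hs hνs ↦ ?_) fun s hs hνs ↦ ?_
  · rw [← integrable_indicator_iff hs]
    exact (hint _).congr (indicator_mul hs hνs)
  · rw [← L2.inner_indicatorConstLp_one (𝕜 := ℂ) hs hνs.ne, hinner,
      integral_congr_ae (indicator_mul hs hνs), integral_indicator hs]

variable [SigmaFinite μ] [SigmaFinite ν]

theorem coeFn_adjoint_tensorLp {φ : α → ℂ} (hφ : MemLp φ 2 μ) (f : Lp ℂ 2 (μ.prod ν)) :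
    adjoint (tensorLp μ ν hφ.toLp) f =ᵐ[ν] fun y ↦ ∫ s, star (φ s) * f (s, y) ∂μ := by
  have integrand (v : Lp ℂ 2 ν) : (fun z ↦ inner ℂ (tensorLp μ ν hφ.toLp v z) (f z))
      =ᵐ[μ.prod ν] fun z ↦ star (v z.2) * (star (φ z.1) * f z) := by
    filter_upwards [coeFn_tensorLp_toLp hφ v] with z hz
    rw [hz, RCLike.inner_apply', starRingEnd_apply, star_mul', mul_comm (star _), mul_assoc]
  have hint (v : Lp ℂ 2 ν) := (L2.integrable_inner (𝕜 := ℂ) _ f).congr (integrand v)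
  refine ae_eq_of_forall_inner_eq_integral (fun v ↦ ?_) fun v ↦ ?_
  · simpa only [integral_const_mul] using (hint v).integral_prod_right
  · rw [adjoint_inner_right, L2.inner_def, integral_congr_ae (integrand v),
      integral_prod_symm _ (hint v)]
    simp only [integral_const_mul]

theorem coeFn_adjoint_tensorLp_flip {ψ : β → ℂ} (hψ : MemLp ψ 2 ν) (f : Lp ℂ 2 (μ.prod ν)) :
    adjoint ((tensorLp μ ν).flip hψ.toLp) f =ᵐ[μ] fun x ↦ ∫ t, star (ψ t) * f (x, t) ∂ν := by
  have integrand (u : Lp ℂ 2 μ) : (fun z ↦ inner ℂ ((tensorLp μ ν).flip hψ.toLp u z) (f z))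
      =ᵐ[μ.prod ν] fun z ↦ star (u z.1) * (star (ψ z.2) * f z) := by
    filter_upwards [coeFn_tensorLp_flip_toLp hψ u] with z hz
    rw [hz, RCLike.inner_apply', starRingEnd_apply, star_mul', mul_comm (star _), mul_assoc]
  have hint (u : Lp ℂ 2 μ) := (L2.integrable_inner (𝕜 := ℂ) _ f).congr (integrand u)
  refine ae_eq_of_forall_inner_eq_integral (fun u ↦ ?_) fun u ↦ ?_
  · simpa only [integral_const_mul] using (hint u).integral_prod_left
  · rw [adjoint_inner_right, L2.inner_def, integral_congr_ae (integrand u),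
      integral_prod _ (hint u)]
    simp only [integral_const_mul]

theorem ae_memLp_two_prodMk_right {f : α × β → ℂ} (hf : MemLp f 2 (μ.prod ν)) :
    ∀ᵐ y ∂ν, MemLp (fun x ↦ f (x, y)) 2 μ := by
  have hsq := (memLp_two_iff_integrable_sq_norm hf.1).1 hf
  filter_upwards [hsq.prod_left_ae, hf.1.prodMk_right] with y hy hy'
  exact (memLp_two_iff_integrable_sq_norm hy').2 hy

theorem ae_memLp_two_prodMk_left {f : α × β → ℂ} (hf : MemLp f 2 (μ.prod ν)) :
    ∀ᵐ x ∂μ, MemLp (fun y ↦ f (x, y)) 2 ν := by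
  have hsq := (memLp_two_iff_integrable_sq_norm hf.1).1 hf
  filter_upwards [hsq.prod_right_ae, hf.1.prodMk_left] with x hx hx'
  exact (memLp_two_iff_integrable_sq_norm hx').2 hx

end PartialIntegrals

section EssRange

variable {α E : Type*} [MeasurableSpace α] [PseudoMetricSpace E]

/-- The essential range of `g` for the measure `μ`: the points all of whose neighbourhoods have
preimages of positive measure. -/
def essRange (μ : Measure α) (g : α → E) : Set E :=
  {l | ∀ ε > 0, 0 < μ (g ⁻¹' Metric.ball l ε)}

variable {μ : Measure α} {g : α → E} {l : E}

theorem exists_forall_ae_le_dist_of_notMem_essRange (hl : l ∉ essRange μ g) :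
    ∃ δ > 0, ∀ᵐ x ∂μ, δ ≤ dist (g x) l := by
  obtain ⟨δ, hδ, hnull⟩ : ∃ δ > 0, μ (g ⁻¹' Metric.ball l δ) = 0 := by
    simpa [essRange] using hl
  refine ⟨δ, hδ, ?_⟩
  filter_upwards [measure_eq_zero_iff_ae_notMem.1 hnull] with x hx
  simpa using hx

theorem essRange_isometry_comp {F : Type*} [PseudoMetricSpace F] {f : E → F} (hf : Isometry f)
    (hrange : IsClosed (Set.range f)) : essRange μ (f ∘ g) = f '' essRange μ g := by
  have preimage_ball (l : E) (ε : ℝ) :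
      f ∘ g ⁻¹' Metric.ball (f l) ε = g ⁻¹' Metric.ball l ε := by
    rw [Set.preimage_comp, hf.preimage_ball]
  ext l
  constructor
  · intro hl
    suffices l ∈ Set.range f by
      obtain ⟨l, rfl⟩ := this
      exact ⟨l, fun ε hε ↦ preimage_ball l ε ▸ hl ε hε, rfl⟩
    refine hrange.closure_subset (Metric.mem_closure_range_iff.2 fun ε hε ↦ ?_)
    obtain ⟨x, hx⟩ := nonempty_of_measure_ne_zero (hl ε hε).ne'
    exact ⟨g x, Metric.mem_ball'.1 hx⟩
  · rintro ⟨l, hl, rfl⟩ ε hε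
    exact (preimage_ball l ε).symm ▸ hl ε hε

theorem essRange_real_eq_Essran (μ : Measure ℝ) (φ : ℝ → ℝ) : essRange μ φ = Essran μ φ := by
  simp only [essRange, Essran, Real.ball_eq_Ioo, Set.preimage, Set.mem_Ioo]

theorem essRange_ofReal (μ : Measure ℝ) (φ : ℝ → ℝ) :
    essRange μ (fun x ↦ (φ x : ℂ)) = (fun r : ℝ ↦ (r : ℂ)) '' Essran μ φ := by
  rw [← essRange_real_eq_Essran]
  exact essRange_isometry_comp isometry_ofReal isometry_ofReal.isClosedEmbedding.isClosed_range

end EssRange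

section MulLp

variable {β : Type*} [MeasurableSpace β] {ν : Measure β} {g k : β → ℂ}

/-- Multiplication by an essentially bounded function, as an operator on `L²`. -/
def mulLp (hg : MemLp g ⊤ ν) : Lp ℂ 2 ν →L[ℂ] Lp ℂ 2 ν :=
  (ContinuousLinearMap.mul ℂ ℂ).holderL ν ⊤ 2 2 hg.toLp

theorem coeFn_mulLp (hg : MemLp g ⊤ ν) (v : Lp ℂ 2 ν) : mulLp hg v =ᵐ[ν] fun y ↦ g y * v y := by
  filter_upwards [(ContinuousLinearMap.mul ℂ ℂ).coeFn_holder (r := 2) hg.toLp v, hg.coeFn_toLp]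
    with y hy hgy
  rw [← hgy]
  exact hy

theorem mulLp_eq_of_forall_ae {T : Lp ℂ 2 ν →L[ℂ] Lp ℂ 2 ν} (hg : MemLp g ⊤ ν)
    (hT : ∀ v, T v =ᵐ[ν] fun y ↦ g y * v y) : T = mulLp hg :=
  ContinuousLinearMap.ext fun v ↦ Lp.ext ((hT v).trans (coeFn_mulLp hg v).symm)

theorem mulLp_congr (hg : MemLp g ⊤ ν) (hk : MemLp k ⊤ ν) (hgk : g =ᵐ[ν] k) :
    mulLp hg = mulLp hk := by
  refine mulLp_eq_of_forall_ae hk fun v ↦ ?_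
  filter_upwards [coeFn_mulLp hg v, hgk] with y hy hgky
  rw [hy, hgky]

theorem algebraMap_eq_mulLp (c : ℂ) :
    algebraMap ℂ (Lp ℂ 2 ν →L[ℂ] Lp ℂ 2 ν) c = mulLp (memLp_top_const c) :=
  mulLp_eq_of_forall_ae _ fun v ↦ Lp.coeFn_smul c v

theorem one_eq_mulLp : (1 : Lp ℂ 2 ν →L[ℂ] Lp ℂ 2 ν) = mulLp (memLp_top_const 1) := by
  rw [← algebraMap_eq_mulLp, map_one]

theorem mulLp_sub (hg : MemLp g ⊤ ν) (hk : MemLp k ⊤ ν) :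
    mulLp hg - mulLp hk = mulLp (hg.sub hk) := by
  refine mulLp_eq_of_forall_ae _ fun v ↦ ?_
  filter_upwards [Lp.coeFn_sub (mulLp hg v) (mulLp hk v), coeFn_mulLp hg v, coeFn_mulLp hk v]
    with y hy hgy hky
  rw [sub_apply, hy, Pi.sub_apply, hgy, hky, Pi.sub_apply, sub_mul]

theorem mulLp_mul (hg : MemLp g ⊤ ν) (hk : MemLp k ⊤ ν) :
    mulLp hg * mulLp hk = mulLp (hk.mul hg : MemLp (g * k) ⊤ ν) := by
  refine mulLp_eq_of_forall_ae _ fun v ↦ ?_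
  filter_upwards [coeFn_mulLp hg (mulLp hk v), coeFn_mulLp hk v] with y hgy hky
  rw [mul_apply_eq_comp, hgy, hky, Pi.mul_apply, mul_assoc]

theorem memLp_top_inv_sub (hg : AEStronglyMeasurable g ν) {l : ℂ} (hl : l ∉ essRange ν g) :
    MemLp (fun y ↦ (l - g y)⁻¹) ⊤ ν := by
  obtain ⟨δ, hδ, hge⟩ := exists_forall_ae_le_dist_of_notMem_essRange hl
  refine memLp_top_of_bound (hg.aemeasurable.const_sub l).inv.aestronglyMeasurable δ⁻¹ ?_
  filter_upwards [hge] with y hy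
  rw [dist_comm, dist_eq_norm] at hy
  rw [norm_inv]
  gcongr

theorem ae_sub_ne_zero_of_notMem_essRange {l : ℂ} (hl : l ∉ essRange ν g) :
    ∀ᵐ y ∂ν, l - g y ≠ 0 := by
  obtain ⟨δ, hδ, hge⟩ := exists_forall_ae_le_dist_of_notMem_essRange hl
  filter_upwards [hge] with y hy hzero
  rw [dist_comm, dist_eq_norm, hzero, norm_zero] at hy
  exact hδ.not_ge hy

theorem spectrum_mulLp_subset (hg : MemLp g ⊤ ν) : spectrum ℂ (mulLp hg) ⊆ essRange ν g := by
  intro l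
  contrapose
  intro hl
  have hinv := memLp_top_inv_sub hg.1 hl
  have hne := ae_sub_ne_zero_of_notMem_essRange hl
  rw [spectrum.notMem_iff, algebraMap_eq_mulLp, mulLp_sub, isUnit_iff_exists]
  refine ⟨mulLp hinv, ?_, ?_⟩ <;>
    rw [mulLp_mul, one_eq_mulLp] <;>
    refine mulLp_congr _ _ ?_ <;>
    filter_upwards [hne] with y hy
  · exact mul_inv_cancel₀ hy
  · exact inv_mul_cancel₀ hy

theorem memLp_top_div_one_sub_mul (hg : MemLp g ⊤ ν) {τ : ℂ} (hτ : τ ≠ 0)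
    (hl : τ⁻¹ ∉ essRange ν g) : MemLp (fun y ↦ g y / (1 - τ * g y)) ⊤ ν := by
  have h : MemLp (fun y ↦ τ⁻¹ * ((τ⁻¹ - g y)⁻¹ * g y)) ⊤ ν :=
    (hg.mul (memLp_top_inv_sub hg.1 hl)).const_mul τ⁻¹
  convert h using 2 with y
  rw [show 1 - τ * g y = τ * (τ⁻¹ - g y) by rw [mul_sub, mul_inv_cancel₀ hτ], div_eq_inv_mul,
    mul_inv, mul_assoc]

theorem one_sub_smul_mulLp_mul (hg : MemLp g ⊤ ν) {τ : ℂ} (hτ : τ ≠ 0)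
    (hl : τ⁻¹ ∉ essRange ν g) :
    (1 - τ • mulLp hg) * mulLp (memLp_top_div_one_sub_mul hg hτ hl) = mulLp hg := by
  rw [one_eq_mulLp, Algebra.smul_def, algebraMap_eq_mulLp, mulLp_mul, mulLp_sub, mulLp_mul]
  refine mulLp_congr _ _ ?_
  filter_upwards [ae_sub_ne_zero_of_notMem_essRange hl] with y hy
  have : 1 - τ * g y ≠ 0 := by
    rw [show 1 - τ * g y = τ * (τ⁻¹ - g y) by rw [mul_sub, mul_inv_cancel₀ hτ]]
    exact mul_ne_zero hτ hy
  exact mul_div_cancel₀ (g y) this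

end MulLp

section Atomless

variable {α : Type*} [MeasurableSpace α] {μ : Measure α} {A : Set α}

/-- A relatively open subset of the support of the measure has positive measure, and the support
of an atomless measure is infinite. -/
theorem exists_seq_pairwise_disjoint_measure_ne_zero [TopologicalSpace α] [T2Space α]
    [HereditarilyLindelofSpace α] [OpensMeasurableSpace α] [NullSingletonClass μ] (hμ : μ ≠ 0) :
    ∃ s : ℕ → Set α, (∀ n, MeasurableSet (s n)) ∧ (∀ n, μ (s n) ≠ 0) ∧
      Pairwise (Function.onFun Disjoint s) := by
  have hinf : μ.support.Infinite := fun hfin ↦ hμ <| by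
    rw [← Measure.measure_univ_eq_zero, ← Set.union_compl_self μ.support]
    exact measure_union_null (hfin.measure_zero μ) Measure.measure_compl_support
  have := hinf.to_subtype
  obtain ⟨U, hU_inf, hU_open, hU_disj⟩ := exists_seq_infinite_isOpen_pairwise_disjoint μ.support
  choose V hV_open hVU using fun n ↦ isOpen_induced_iff.1 (hU_open n)
  have image_eq (n : ℕ) : Subtype.val '' U n = μ.support ∩ V n := by
    rw [← hVU n, Subtype.image_preimage_coe]
  refine ⟨fun n ↦ μ.support ∩ V n,
    fun n ↦ Measure.isClosed_support.measurableSet.inter (hV_open n).measurableSet, fun n ↦ ?_,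
    fun i j hij ↦ ?_⟩
  · obtain ⟨x, hx⟩ := (hU_inf n).nonempty
    have hxV : (x : α) ∈ V n := by rwa [← hVU n] at hx
    change μ (μ.support ∩ V n) ≠ 0
    rw [Set.inter_comm, measure_inter_conull Measure.measure_compl_support]
    exact ((Measure.mem_support_iff_forall _).1 x.2 _ ((hV_open n).mem_nhds hxV)).ne'
  · rw [Function.onFun, ← image_eq, ← image_eq]
    exact Set.disjoint_image_of_injective Subtype.val_injective (hU_disj hij)

theorem inf_orthogonal_ne_bot {E : Type*} [NormedAddCommGroup E] [InnerProductSpace ℂ E]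
    {K F : Submodule ℂ E} (hK : ¬ FiniteDimensional ℂ K) [FiniteDimensional ℂ F] :
    K ⊓ Fᗮ ≠ ⊥ := fun h ↦ by
  refine hK (Module.Finite.of_injective (F.orthogonalProjectionOnto.toLinearMap ∘ₗ K.subtype) ?_)
  rw [← LinearMap.ker_eq_bot, LinearMap.ker_eq_bot']
  intro v hv
  have hvF : (v : E) ∈ Fᗮ := Submodule.orthogonalProjectionOnto_eq_zero_iff.1 hv
  have hv_bot : (v : E) ∈ K ⊓ Fᗮ := ⟨v.2, hvF⟩
  rwa [h, Submodule.mem_bot, Submodule.coe_eq_zero] at hv_bot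

variable (μ A) in
/-- The subspace of `L²` of functions vanishing almost everywhere outside `A`. -/
def supportedLp : Submodule ℂ (Lp ℂ 2 μ) where
  carrier := {v | ∀ᵐ x ∂μ, x ∉ A → v x = 0}
  zero_mem' := by
    filter_upwards [Lp.coeFn_zero ℂ 2 μ] with x hx _ using hx
  add_mem' {v w} hv hw := by
    rw [Set.mem_ofPred_eq] at hv hw ⊢
    filter_upwards [Lp.coeFn_add v w, hv, hw] with x hx hvx hwx hxA
    rw [hx, Pi.add_apply, hvx hxA, hwx hxA, add_zero]
  smul_mem' c v hv := by
    rw [Set.mem_ofPred_eq] at hv ⊢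
    filter_upwards [Lp.coeFn_smul c v, hv] with x hx hvx hxA
    rw [hx, Pi.smul_apply, hvx hxA, smul_zero]

theorem mem_supportedLp_iff {v : Lp ℂ 2 μ} : v ∈ supportedLp μ A ↔ ∀ᵐ x ∂μ, x ∉ A → v x = 0 :=
  Iff.rfl

theorem supportedLp_univ : supportedLp μ Set.univ = ⊤ :=
  eq_top_iff.2 fun _ _ ↦ mem_supportedLp_iff.2 (by simp)

theorem indicatorConstLp_mem_supportedLp {s : Set α} (hs : MeasurableSet s) (hμs : μ s ≠ ⊤)
    (hsA : s ⊆ A) (c : ℂ) : indicatorConstLp 2 hs hμs c ∈ supportedLp μ A := by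
  rw [mem_supportedLp_iff]
  filter_upwards [indicatorConstLp_coeFn_notMem (p := 2) (hs := hs) (hμs := hμs) (c := c)]
    with x hx hxA using hx fun hxs ↦ hxA (hsA hxs)

variable [TopologicalSpace α] [T2Space α] [HereditarilyLindelofSpace α] [OpensMeasurableSpace α]
  [NullSingletonClass μ] [SigmaFinite μ]

theorem not_finiteDimensional_supportedLp (hA : MeasurableSet A) (hμA : μ A ≠ 0) :
    ¬ FiniteDimensional ℂ (supportedLp μ A) := fun _ ↦ by
  obtain ⟨s, hs_meas, hs_ne, hs_disj⟩ :=
    exists_seq_pairwise_disjoint_measure_ne_zero (mt Measure.restrict_eq_zero.1 hμA)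
  simp only [Measure.restrict_apply (hs_meas _), ← pos_iff_ne_zero] at hs_ne
  choose r hr_meas hr_sub hr_pos hr_lt using fun n ↦
    Measure.exists_subset_measure_lt_top ((hs_meas n).inter hA) (hs_ne n)
  let v (n : ℕ) : supportedLp μ A := ⟨indicatorConstLp 2 (hr_meas n) (hr_lt n).ne 1,
    indicatorConstLp_mem_supportedLp _ _ ((hr_sub n).trans Set.inter_subset_right) 1⟩
  have inner_eq (i j : ℕ) : inner ℂ (v i) (v j) = μ.real (r i ∩ r j) :=
    L2.inner_indicatorConstLp_one_indicatorConstLp_one (hr_meas i) (hr_meas j)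
      (hr_lt i).ne (hr_lt j).ne
  have hv_ne (n : ℕ) : v n ≠ 0 := by
    rw [← inner_self_ne_zero (𝕜 := ℂ), inner_eq, Set.inter_self, ofReal_ne_zero]
    exact (measureReal_ne_zero_iff (hr_lt n).ne).2 (hr_pos n).ne'
  have hv_orth (i j : ℕ) (hij : i ≠ j) : inner ℂ (v i) (v j) = 0 := by
    have hr_disj : Disjoint (r i) (r j) :=
      (hs_disj hij).mono ((hr_sub i).trans Set.inter_subset_left)
        ((hr_sub j).trans Set.inter_subset_left)
    rw [inner_eq, hr_disj.inter_eq, measureReal_empty, ofReal_zero]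
  exact Module.Finite.not_linearIndependent_of_infinite v
    (linearIndependent_of_ne_zero_of_inner_eq_zero hv_ne hv_orth)

theorem orthogonal_ne_bot_of_finiteDimensional [NeZero μ] (F : Submodule ℂ (Lp ℂ 2 μ))
    [FiniteDimensional ℂ F] : Fᗮ ≠ ⊥ := by
  have h := inf_orthogonal_ne_bot (F := F)
    (not_finiteDimensional_supportedLp .univ (NeZero.ne (μ Set.univ)))
  rwa [supportedLp_univ, top_inf_eq] at h

theorem essRange_subset_leftEssentialSpectrum_mulLp {g : α → ℂ} (hg : MemLp g ⊤ μ) :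
    essRange μ g ⊆ leftEssentialSpectrum (mulLp hg) := by
  intro l hl F _ ε hε
  have preimage_nullMeasurable : NullMeasurableSet (g ⁻¹' Metric.ball l ε) μ :=
    hg.1.aemeasurable.nullMeasurable Metric.isOpen_ball.measurableSet
  obtain ⟨A, hA_sub, hA, hA_ae⟩ := preimage_nullMeasurable.exists_measurable_subset_ae_eq
  have hμA : μ A ≠ 0 := measure_congr hA_ae ▸ (hl ε hε).ne'
  obtain ⟨v, ⟨hvA, hvF⟩, hv₀⟩ := Submodule.exists_mem_ne_zero_of_ne_bot
    (inf_orthogonal_ne_bot (F := F) (not_finiteDimensional_supportedLp hA hμA))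
  refine ⟨v, hvF, hv₀, Lp.norm_le_mul_norm_of_ae_le_mul ?_⟩
  filter_upwards [Lp.coeFn_sub (mulLp hg v) (l • v), coeFn_mulLp hg v, Lp.coeFn_smul l v, hvA]
    with x h₁ h₂ h₃ hx
  rw [h₁, Pi.sub_apply, h₂, h₃, Pi.smul_apply, smul_eq_mul, ← sub_mul, norm_mul]
  by_cases hxA : x ∈ A
  · gcongr
    exact (mem_ball_iff_norm.1 (hA_sub hxA)).le
  · rw [hx hxA, norm_zero, mul_zero, mul_zero]

end Atomless

section DegenerateKernels

open ContinuousLinearMap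

variable {ι κ α β γ : Type*} [Fintype ι] [Fintype κ] [MeasurableSpace α] [MeasurableSpace β]
  [MeasurableSpace γ] {μ : Measure α} {ν : Measure β} {ρ : Measure γ}

theorem coeFn_blockDiag_mulLp {π : γ → β} (hπ : Measure.QuasiMeasurePreserving π ρ ν)
    {J : ι → Lp ℂ 2 ν →L[ℂ] Lp ℂ 2 ρ} {e : ι → γ → ℂ}
    (hJ : ∀ k v, J k v =ᵐ[ρ] fun z ↦ e k z * v (π z)) {g : ι → β → ℂ}
    (hg : ∀ k, MemLp (g k) ⊤ ν) {f : Lp ℂ 2 ρ} {G : ι → β → ℂ}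
    (hG : ∀ k, adjoint (J k) f =ᵐ[ν] G k) :
    blockDiag J (fun k ↦ mulLp (hg k)) f =ᵐ[ρ]
      fun z ↦ ∑ k, g k (π z) * (e k z * G k (π z)) := by
  have summand (k : ι) : J k (mulLp (hg k) (adjoint (J k) f)) =ᵐ[ρ]
      fun z ↦ g k (π z) * (e k z * G k (π z)) := by
    filter_upwards [hJ k (mulLp (hg k) (adjoint (J k) f)),
      hπ.ae (coeFn_mulLp (hg k) (adjoint (J k) f)), hπ.ae (hG k)] with z h₁ h₂ h₃
    rw [h₁, h₂, h₃, mul_left_comm]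
  rw [blockDiag_apply]
  filter_upwards [Lp.coeFn_fun_finsetSum Finset.univ fun k ↦ J k (mulLp (hg k) (adjoint (J k) f)),
    ae_all_iff.2 summand] with z hsum hz
  rw [hsum]
  exact Finset.sum_congr rfl fun k _ ↦ hz k

variable [SigmaFinite μ] [SigmaFinite ν] {φ : ι → α → ℂ} {h : ι → β → ℂ} {ψ : κ → β → ℂ}
  {p : κ → α → ℂ} {T : Lp ℂ 2 (μ.prod ν) →L[ℂ] Lp ℂ 2 (μ.prod ν)} {τ : ℂ}

/-- The partial integral operator in the first variable with the degenerate kernel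
`∑ k, φ k x * star (φ k s) * h k y`. -/
def partialIntegralFst (hφ : ∀ k, MemLp (φ k) 2 μ) (hh : ∀ k, MemLp (h k) ⊤ ν) :
    Lp ℂ 2 (μ.prod ν) →L[ℂ] Lp ℂ 2 (μ.prod ν) :=
  blockDiag (fun k ↦ tensorLp μ ν (hφ k).toLp) fun k ↦ mulLp (hh k)

/-- The partial integral operator in the second variable with the degenerate kernel
`∑ j, p j x * ψ j y * star (ψ j t)`. -/
def partialIntegralSnd (hψ : ∀ j, MemLp (ψ j) 2 ν) (hp : ∀ j, MemLp (p j) ⊤ μ) :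
    Lp ℂ 2 (μ.prod ν) →L[ℂ] Lp ℂ 2 (μ.prod ν) :=
  blockDiag (fun j ↦ (tensorLp μ ν).flip (hψ j).toLp) fun j ↦ mulLp (hp j)

theorem coeFn_partialIntegralFst (hφ : ∀ k, MemLp (φ k) 2 μ) (hh : ∀ k, MemLp (h k) ⊤ ν)
    (f : Lp ℂ 2 (μ.prod ν)) : partialIntegralFst hφ hh f =ᵐ[μ.prod ν]
      fun z ↦ ∑ k, h k z.2 * (φ k z.1 * ∫ s, star (φ k s) * f (s, z.2) ∂μ) :=
  coeFn_blockDiag_mulLp (π := Prod.snd) (e := fun k z ↦ φ k z.1)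
    (G := fun k y ↦ ∫ s, star (φ k s) * f (s, y) ∂μ) Measure.quasiMeasurePreserving_snd
    (fun k ↦ coeFn_tensorLp_toLp (hφ k)) hh fun k ↦ coeFn_adjoint_tensorLp (hφ k) f

theorem coeFn_partialIntegralSnd (hψ : ∀ j, MemLp (ψ j) 2 ν) (hp : ∀ j, MemLp (p j) ⊤ μ)
    (f : Lp ℂ 2 (μ.prod ν)) : partialIntegralSnd hψ hp f =ᵐ[μ.prod ν]
      fun z ↦ ∑ j, p j z.1 * (ψ j z.2 * ∫ t, star (ψ j t) * f (z.1, t) ∂ν) :=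
  coeFn_blockDiag_mulLp (π := Prod.fst) (e := fun j z ↦ ψ j z.2)
    (G := fun j x ↦ ∫ t, star (ψ j t) * f (x, t) ∂ν) Measure.quasiMeasurePreserving_fst
    (fun j ↦ coeFn_tensorLp_flip_toLp (hψ j)) hp fun j ↦ coeFn_adjoint_tensorLp_flip (hψ j) f

theorem eq_partialIntegralFst_of_ae_eq_integral (hφ : ∀ k, MemLp (φ k) 2 μ)
    (hh : ∀ k, MemLp (h k) ⊤ ν)
    (hT : ∀ f, ∀ᵐ z ∂μ.prod ν,
      T f z = ∫ s, (∑ k, φ k z.1 * star (φ k s) * h k z.2) * f (s, z.2) ∂μ) :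
    T = partialIntegralFst hφ hh := by
  refine ContinuousLinearMap.ext fun f ↦ Lp.ext ?_
  filter_upwards [hT f, coeFn_partialIntegralFst hφ hh f,
    Measure.quasiMeasurePreserving_snd.ae (ae_memLp_two_prodMk_right (Lp.memLp f))] with z h₁ h₂ h₃
  simp only [h₁, h₂, ← mul_assoc, ← integral_sum_mul_star_mul hφ h₃ fun k ↦ h k z.2 * φ k z.1]
  simp only [mul_comm (h _ _), mul_right_comm]

theorem eq_partialIntegralSnd_of_ae_eq_integral (hψ : ∀ j, MemLp (ψ j) 2 ν)
    (hp : ∀ j, MemLp (p j) ⊤ μ)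
    (hT : ∀ f, ∀ᵐ z ∂μ.prod ν,
      T f z = ∫ t, (∑ j, p j z.1 * ψ j z.2 * star (ψ j t)) * f (z.1, t) ∂ν) :
    T = partialIntegralSnd hψ hp := by
  refine ContinuousLinearMap.ext fun f ↦ Lp.ext ?_
  filter_upwards [hT f, coeFn_partialIntegralSnd hψ hp f,
    Measure.quasiMeasurePreserving_fst.ae (ae_memLp_two_prodMk_left (Lp.memLp f))] with z h₁ h₂ h₃
  simp only [h₁, h₂, ← mul_assoc, ← integral_sum_mul_star_mul hψ h₃ fun j ↦ p j z.1 * ψ j z.2]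

theorem isCompactOperator_partialIntegralFst_mul (hφ : ∀ k, MemLp (φ k) 2 μ)
    (hh : ∀ k, MemLp (h k) ⊤ ν) (hψ : ∀ j, MemLp (ψ j) 2 ν) (hp : ∀ j, MemLp (p j) ⊤ μ) :
    IsCompactOperator (partialIntegralFst hφ hh * partialIntegralSnd hψ hp) :=
  isHilbertTensor_tensorLp.isCompactOperator_blockDiag_mul _ _ _ _

theorem spectrum_partialIntegralFst_subset (hφ : ∀ k, MemLp (φ k) 2 μ)
    (hφON : Orthonormal ℂ fun k ↦ (hφ k).toLp) (hh : ∀ k, MemLp (h k) ⊤ ν) :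
    spectrum ℂ (partialIntegralFst hφ hh) ⊆ {0} ∪ ⋃ k, essRange ν (h k) := by
  classical
  exact (spectrum_blockDiag_subset
    (isHilbertTensor_tensorLp.isOrthonormalEmbedding hφON) _).trans <|
    Set.union_subset_union_right _ <| Set.iUnion_mono fun k ↦ spectrum_mulLp_subset (hh k)

theorem spectrum_partialIntegralSnd_subset (hψ : ∀ j, MemLp (ψ j) 2 ν)
    (hψON : Orthonormal ℂ fun j ↦ (hψ j).toLp) (hp : ∀ j, MemLp (p j) ⊤ μ) :
    spectrum ℂ (partialIntegralSnd hψ hp) ⊆ {0} ∪ ⋃ j, essRange μ (p j) := by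
  classical
  exact (spectrum_blockDiag_subset
    (isHilbertTensor_tensorLp.flip.isOrthonormalEmbedding hψON) _).trans <|
    Set.union_subset_union_right _ <| Set.iUnion_mono fun j ↦ spectrum_mulLp_subset (hp j)

theorem one_sub_smul_partialIntegralFst_mul_eq (hφ : ∀ k, MemLp (φ k) 2 μ)
    (hφON : Orthonormal ℂ fun k ↦ (hφ k).toLp) (hh : ∀ k, MemLp (h k) ⊤ ν) (hτ : τ ≠ 0)
    (hτh : ∀ k, τ⁻¹ ∉ essRange ν (h k))
    (hT : ∀ f, ∀ᵐ z ∂μ.prod ν, T f z = ∑ k, h k z.2 / (1 - τ * h k z.2) *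
      (φ k z.1 * ∫ s, star (φ k s) * f (s, z.2) ∂μ)) :
    (1 - τ • partialIntegralFst hφ hh) * T = partialIntegralFst hφ hh := by
  classical
  have hdiv (k : ι) := memLp_top_div_one_sub_mul (hh k) hτ (hτh k)
  have T_eq : T = partialIntegralFst hφ hdiv := ContinuousLinearMap.ext fun f ↦ Lp.ext <| by
    filter_upwards [hT f, coeFn_partialIntegralFst hφ hdiv f] with z h₁ h₂
    rw [h₁, h₂]
  rw [T_eq]
  exact one_sub_smul_blockDiag_mul (isHilbertTensor_tensorLp.isOrthonormalEmbedding hφON)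
    fun k ↦ one_sub_smul_mulLp_mul (hh k) hτ (hτh k)

section Atomless

variable [TopologicalSpace β] [T2Space β] [HereditarilyLindelofSpace β] [OpensMeasurableSpace β]
  [NullSingletonClass ν]

theorem essRange_subset_spectrum_partialIntegralFst (hφ : ∀ k, MemLp (φ k) 2 μ)
    (hφON : Orthonormal ℂ fun k ↦ (hφ k).toLp) (hh : ∀ k, MemLp (h k) ⊤ ν) (i : ι) :
    essRange ν (h i) ⊆ spectrum ℂ (partialIntegralFst hφ hh) :=
  (essRange_subset_leftEssentialSpectrum_mulLp (hh i)).trans <|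
    isHilbertTensor_tensorLp.leftEssentialSpectrum_subset_spectrum_blockDiag hφON
      (fun k ↦ mulLp (hh k)) i

variable [TopologicalSpace α] [T2Space α] [HereditarilyLindelofSpace α] [OpensMeasurableSpace α]
  [NullSingletonClass μ]

theorem subset_spectrum_partialIntegralFst_add [NeZero μ] [NeZero ν] (hφ : ∀ k, MemLp (φ k) 2 μ)
    (hφON : Orthonormal ℂ fun k ↦ (hφ k).toLp) (hh : ∀ k, MemLp (h k) ⊤ ν)
    (hψ : ∀ j, MemLp (ψ j) 2 ν) (hψON : Orthonormal ℂ fun j ↦ (hψ j).toLp)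
    (hp : ∀ j, MemLp (p j) ⊤ μ) :
    {0} ∪ (⋃ i, essRange ν (h i)) ∪ (⋃ j, essRange μ (p j)) ⊆
      spectrum ℂ (partialIntegralFst hφ hh + partialIntegralSnd hψ hp) := by
  have ht := isHilbertTensor_tensorLp (μ := μ) (ν := ν)
  let A (k : ι) := mulLp (hh k)
  let B (j : κ) := mulLp (hp j)
  refine Set.union_subset (Set.union_subset ?_ (Set.iUnion_subset fun i ↦ ?_))
    (Set.iUnion_subset fun j ↦ ?_)
  · have := FiniteDimensional.span_of_finite ℂ (Set.finite_range fun k ↦ (hφ k).toLp)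
    have := FiniteDimensional.span_of_finite ℂ (Set.finite_range fun j ↦ (hψ j).toLp)
    exact Set.singleton_subset_iff.2 <| ht.zero_mem_spectrum_add A B
      (orthogonal_ne_bot_of_finiteDimensional _) (orthogonal_ne_bot_of_finiteDimensional _)
  · exact (essRange_subset_leftEssentialSpectrum_mulLp (hh i)).trans
      (ht.leftEssentialSpectrum_subset hφON _ A B i)
  · rw [add_comm]
    exact (essRange_subset_leftEssentialSpectrum_mulLp (hp j)).trans
      (ht.flip.leftEssentialSpectrum_subset hψON _ B A j)

theorem statement15_general [NeZero μ] [NeZero ν] [DecidableEq ι] [DecidableEq κ]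
    (hφL2 : ∀ k, MemLp (φ k) 2 μ)
    (hφON : ∀ i j, ∫ x, star (φ i x) * φ j x ∂μ = if i = j then 1 else 0)
    (hh : ∀ k, MemLp (h k) ⊤ ν)
    (hψL2 : ∀ j, MemLp (ψ j) 2 ν)
    (hψON : ∀ i j, ∫ y, star (ψ i y) * ψ j y ∂ν = if i = j then 1 else 0)
    (hp : ∀ j, MemLp (p j) ⊤ μ)
    {T₁ T₂ : Lp ℂ 2 (μ.prod ν) →L[ℂ] Lp ℂ 2 (μ.prod ν)}
    (hT₁ : ∀ f, ∀ᵐ z ∂μ.prod ν,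
      T₁ f z = ∫ s, (∑ k, φ k z.1 * star (φ k s) * h k z.2) * f (s, z.2) ∂μ)
    (hT₂ : ∀ f, ∀ᵐ z ∂μ.prod ν,
      T₂ f z = ∫ t, (∑ j, p j z.1 * ψ j z.2 * star (ψ j t)) * f (z.1, t) ∂ν)
    {P : ι → Lp ℂ 2 (μ.prod ν) →L[ℂ] Lp ℂ 2 (μ.prod ν)}
    (hP : ∀ k f, ∀ᵐ z ∂μ.prod ν, P k f z = φ k z.1 * ∫ s, star (φ k s) * f (s, z.2) ∂μ)
    {S W : ℂ → Lp ℂ 2 (μ.prod ν) →L[ℂ] Lp ℂ 2 (μ.prod ν)}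
    (hS : ∀ τ, τ ≠ 0 → τ⁻¹ ∈ resolventSet ℂ T₁ → τ⁻¹ ∈ resolventSet ℂ T₂ →
      ∀ f, ∀ᵐ z ∂μ.prod ν, S τ f z = ∑ k, h k z.2 / (1 - τ * h k z.2) * P k f z)
    (hW : ∀ τ, τ ≠ 0 → τ⁻¹ ∈ resolventSet ℂ T₁ → τ⁻¹ ∈ resolventSet ℂ T₂ →
      (1 - τ • T₂) * W τ = S τ * T₂) :
    spectrum ℂ (T₁ + T₂) = {0} ∪ (⋃ i, essRange ν (h i)) ∪ (⋃ j, essRange μ (p j)) ∪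
      (fun τ ↦ τ⁻¹) '' {τ | τ ≠ 0 ∧ τ⁻¹ ∈ resolventSet ℂ T₁ ∧ τ⁻¹ ∈ resolventSet ℂ T₂ ∧
        ∃ g ≠ 0, (τ ^ 2 • W τ) g = g} := by
  rw [← orthonormal_toLp_iff hφL2] at hφON
  rw [← orthonormal_toLp_iff hψL2] at hψON
  obtain rfl := eq_partialIntegralFst_of_ae_eq_integral hφL2 hh hT₁
  obtain rfl := eq_partialIntegralSnd_of_ae_eq_integral hψL2 hp hT₂
  refine spectrum_add_eq_union (isCompactOperator_partialIntegralFst_mul hφL2 hh hψL2 hp)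
    (.inl (.inl rfl))
    ((spectrum_partialIntegralFst_subset hφL2 hφON hh).trans Set.subset_union_left)
    ((spectrum_partialIntegralSnd_subset hψL2 hψON hp).trans <|
      Set.union_subset_union_left _ Set.subset_union_left)
    (subset_spectrum_partialIntegralFst_add hφL2 hφON hh hψL2 hψON hp)
    (fun τ hτ hτ₁ hτ₂ ↦ ?_) hW
  refine one_sub_smul_partialIntegralFst_mul_eq hφL2 hφON hh hτ
    (fun k hk ↦ essRange_subset_spectrum_partialIntegralFst hφL2 hφON hh k hk hτ₁) fun f ↦ ?_
  filter_upwards [hS τ hτ hτ₁ hτ₂ f, ae_all_iff.2 fun k ↦ hP k f] with z hSz hPz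
  rw [hSz]
  simp only [hPz]

end Atomless

end DegenerateKernels

theorem statement15
    (a b c d : ℝ) (hab : a < b) (hcd : c < d)
    (n : ℕ) (hn : 1 ≤ n)
    (φ : Fin n → ℝ → ℂ)
    (hφL2 : ∀ k, MemLp (φ k) 2 (muI a b))
    (hφON : ∀ i j, ∫ x, star (φ i x) * φ j x ∂(muI a b) = if i = j then 1 else 0)
    (h : Fin n → ℝ → ℝ)
    (hhmeas : ∀ k, Measurable (h k))
    (hhbdd : ∀ k, ∃ C : ℝ, ∀ᵐ y ∂(muI c d), |h k y| ≤ C)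
    (m : ℕ) (hm : 1 ≤ m)
    (ψ : Fin m → ℝ → ℂ)
    (hψL2 : ∀ j, MemLp (ψ j) 2 (muI c d))
    (hψON : ∀ i j, ∫ y, star (ψ i y) * ψ j y ∂(muI c d) = if i = j then 1 else 0)
    (p : Fin m → ℝ → ℝ)
    (hpmeas : ∀ j, Measurable (p j))
    (hpbdd : ∀ j, ∃ C : ℝ, ∀ᵐ x ∂(muI a b), |p j x| ≤ C)
    (T1 T2 : Lp ℂ 2 ((muI a b).prod (muI c d)) →L[ℂ] Lp ℂ 2 ((muI a b).prod (muI c d)))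
    (hT1sa : IsSelfAdjoint T1) (hT2sa : IsSelfAdjoint T2)
    (hT1 : ∀ f : Lp ℂ 2 ((muI a b).prod (muI c d)),
      ∀ᵐ z ∂((muI a b).prod (muI c d)),
        T1 f z = ∫ s, (∑ k, φ k z.1 * star (φ k s) * (h k z.2 : ℂ)) * f (s, z.2) ∂(muI a b))
    (hT2 : ∀ f : Lp ℂ 2 ((muI a b).prod (muI c d)),
      ∀ᵐ z ∂((muI a b).prod (muI c d)),
        T2 f z = ∫ t, (∑ j, (p j z.1 : ℂ) * ψ j z.2 * star (ψ j t)) * f (z.1, t) ∂(muI c d))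
    -- the orthogonal projections `P k`
    (P : Fin n → (Lp ℂ 2 ((muI a b).prod (muI c d)) →L[ℂ] Lp ℂ 2 ((muI a b).prod (muI c d))))
    (hP : ∀ k, ∀ f : Lp ℂ 2 ((muI a b).prod (muI c d)),
      ∀ᵐ z ∂((muI a b).prod (muI c d)),
        P k f z = φ k z.1 * ∫ s, star (φ k s) * f (s, z.2) ∂(muI a b))
    -- the operators S₁(τ)
    (S1 : ℂ → (Lp ℂ 2 ((muI a b).prod (muI c d)) →L[ℂ] Lp ℂ 2 ((muI a b).prod (muI c d))))
    (hS1 : ∀ τ : ℂ, τ ≠ 0 → τ⁻¹ ∈ resolventSet ℂ T1 → τ⁻¹ ∈ resolventSet ℂ T2 →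
      ∀ f : Lp ℂ 2 ((muI a b).prod (muI c d)),
        ∀ᵐ z ∂((muI a b).prod (muI c d)),
          S1 τ f z = ∑ k, ((h k z.2 : ℂ) / (1 - τ * (h k z.2 : ℂ))) * P k f z)
    -- the operators W₁(τ) = (E-τT₂)⁻¹ S₁(τ) T₂
    (W1 : ℂ → (Lp ℂ 2 ((muI a b).prod (muI c d)) →L[ℂ] Lp ℂ 2 ((muI a b).prod (muI c d))))
    (hW1 : ∀ τ : ℂ, τ ≠ 0 → τ⁻¹ ∈ resolventSet ℂ T1 → τ⁻¹ ∈ resolventSet ℂ T2 →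
      (1 - τ • T2) * W1 τ = S1 τ * T2)
    -- the sets D(T) and R(T)
    (DT : Set ℂ)
    (hDT : DT = {τ : ℂ | τ ≠ 0 ∧ τ⁻¹ ∈ resolventSet ℂ T1 ∧ τ⁻¹ ∈ resolventSet ℂ T2 ∧
      ∃ g : Lp ℂ 2 ((muI a b).prod (muI c d)), g ≠ 0 ∧ (τ ^ 2 • W1 τ) g = g})
    -- the set D₀(T)
    (D0 : Set ℂ) (hD0 : D0 = (fun τ : ℂ => τ⁻¹) '' DT) :
    spectrum ℂ (T1 + T2) =
      {0} ∪ (⋃ i : Fin n, (fun r : ℝ => (r : ℂ)) '' Essran (muI c d) (h i)) ∪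
        (⋃ j : Fin m, (fun r : ℝ => (r : ℂ)) '' Essran (muI a b) (p j)) ∪ D0 := by
  have : NeZero (muI a b) := ⟨by simpa using hab⟩
  have : NeZero (muI c d) := ⟨by simpa using hcd⟩
  have memLp_top_of_abs_le {μ : Measure ℝ} {g : ℝ → ℝ} (hg : Measurable g)
      (hbdd : ∃ C, ∀ᵐ x ∂μ, |g x| ≤ C) : MemLp (fun x ↦ (g x : ℂ)) ⊤ μ := by
    obtain ⟨C, hC⟩ := hbdd
    exact memLp_top_of_bound (measurable_ofReal.comp hg).aestronglyMeasurable C (by simpa using hC)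
  subst hD0 hDT
  simp only [← essRange_ofReal]
  exact statement15_general hφL2 hφON (fun k ↦ memLp_top_of_abs_le (hhmeas k) (hhbdd k)) hψL2 hψON
    (fun j ↦ memLp_top_of_abs_le (hpmeas j) (hpbdd j)) hT1 hT2 hP hS1 hW1
end
end

section
/- The function Δ(z) is holomorphic on the open domain G = ℂ \ (σ(T₁) ∪ σ(T₂)). -/
open MeasureTheory Complex

noncomputable section

/-! For each `j` the map `g ↦ φ_j ⊗ g` is an isometry of `L²(dy)` into `L²(dx dy)` which carries
multiplication by `h_j` to `T₁`. A ball around a point outside `σ(T₁)` on which `T₁` is bounded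
below therefore cannot contain values of `h_j` on a set of positive measure, so `h_j(y) ∈ σ(T₁)` for
almost every `y`; likewise `p_k(x) ∈ σ(T₂)` for almost every `x`. Orthonormality of `ψ` collapses
the matrix `Π` to
`Π_{(k,j),(k',j')}(z) = z ⟨ψ_k', h_j / (z - h_j) ψ_k⟩ ⟨φ_j', p_k' / (z - p_k') φ_j⟩`,
a product of Cauchy type integrals which are holomorphic off the two spectra, and `Δ` is a
polynomial in the entries of `Π(z)` and in `z`. -/

open scoped ENNReal

section Spectrum

lemma exists_norm_le_mul_norm_smul_sub_of_notMem_spectrum {𝕜 E : Type*}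
    [NontriviallyNormedField 𝕜] [NormedAddCommGroup E] [NormedSpace 𝕜 E] {T : E →L[𝕜] E} {z : 𝕜}
    (hz : z ∉ spectrum 𝕜 T) : ∃ C > 0, ∀ f : E, ‖f‖ ≤ C * ‖z • f - T f‖ := by
  obtain ⟨R, hR⟩ := (spectrum.notMem_iff.1 hz).exists_left_inv
  refine ⟨‖R‖ + 1, by positivity, fun f => ?_⟩
  have hRf : R (z • f - T f) = f := by
    simpa [Algebra.algebraMap_eq_smul_one] using DFunLike.congr_fun hR f
  calc ‖f‖ = ‖R (z • f - T f)‖ := by rw [hRf]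
    _ ≤ ‖R‖ * ‖z • f - T f‖ := R.le_opNorm _
    _ ≤ (‖R‖ + 1) * ‖z • f - T f‖ := by gcongr; linarith

variable {𝕜 α E : Type*} [RCLike 𝕜] [MeasurableSpace α] {μ : Measure α} {p : ℝ≥0∞}

lemma exists_lp_eq_mul_and_norm_smul_sub_le {u : α → 𝕜} (hu : AEMeasurable u μ) {z : 𝕜} {ε : ℝ}
    (g : Lp 𝕜 p μ) (hug : ∀ᵐ x ∂μ, g x ≠ 0 → ‖z - u x‖ ≤ ε) :
    ∃ g' : Lp 𝕜 p μ, (g' =ᵐ[μ] fun x => u x * g x) ∧ ‖z • g - g'‖ ≤ ε * ‖g‖ := by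
  have hle : ∀ᵐ x ∂μ, ‖(z - u x) * g x‖ ≤ ε * ‖g x‖ := by
    filter_upwards [hug] with x hx
    rw [norm_mul]
    by_cases hgx : g x = 0
    · simp [hgx]
    · gcongr
      exact hx hgx
  have hmem : MemLp (fun x => (z - u x) * g x) p μ :=
    (Lp.memLp g).of_le_mul
      ((hu.const_sub z).aestronglyMeasurable.mul (Lp.aestronglyMeasurable g)) hle
  refine ⟨z • g - hmem.toLp, ?_, ?_⟩
  · filter_upwards [Lp.coeFn_sub (z • g) hmem.toLp, Lp.coeFn_smul z g, hmem.coeFn_toLp]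
      with x hsub hsmul hx
    rw [hsub, Pi.sub_apply, hsmul, Pi.smul_apply, hx, smul_eq_mul]
    ring
  · rw [sub_sub_cancel]
    refine Lp.norm_le_mul_norm_of_ae_le_mul ?_
    filter_upwards [hmem.coeFn_toLp, hle] with x hx hlex
    rwa [hx]

variable [Fact (1 ≤ p)] [NormedAddCommGroup E] [NormedSpace 𝕜 E] [SigmaFinite μ] {u : α → 𝕜}
  {T : E →L[𝕜] E}

lemma measure_preimage_ball_eq_zero_of_norm_le_mul (hu : AEMeasurable u μ)
    (J : Lp 𝕜 p μ →ₗᵢ[𝕜] E)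
    (hTJ : ∀ g g' : Lp 𝕜 p μ, (g' =ᵐ[μ] fun x => u x * g x) → T (J g) = J g')
    {z : 𝕜} {C : ℝ} (hC : 0 < C) (hT : ∀ f : E, ‖f‖ ≤ C * ‖z • f - T f‖) :
    μ (u ⁻¹' Metric.ball z (2 * C)⁻¹) = 0 := by
  by_contra hpos
  obtain ⟨s, hsu, hs, hs_ae⟩ :=
    (hu.nullMeasurableSet_preimage measurableSet_ball).exists_measurable_subset_ae_eq
  rw [← measure_congr hs_ae, ← ne_eq, ← pos_iff_ne_zero] at hpos
  obtain ⟨t, ht, hts, htpos, htfin⟩ := Measure.exists_subset_measure_lt_top hs hpos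
  set g : Lp 𝕜 p μ := indicatorConstLp p ht htfin.ne 1 with hg
  have hug : ∀ᵐ x ∂μ, g x ≠ 0 → ‖z - u x‖ ≤ (2 * C)⁻¹ := by
    filter_upwards [indicatorConstLp_coeFn_notMem (hs := ht) (hμs := htfin.ne) (c := (1 : 𝕜))]
      with x hx hgx
    rw [← dist_eq_norm, dist_comm]
    exact (Metric.mem_ball.1 (hsu (hts (not_imp_comm.1 hx hgx)))).le
  obtain ⟨g', hg', hle⟩ := exists_lp_eq_mul_and_norm_smul_sub_le hu g hug
  have hg_le : ‖g‖ ≤ 2⁻¹ * ‖g‖ := calc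
    ‖g‖ = ‖J g‖ := (J.norm_map g).symm
    _ ≤ C * ‖z • J g - T (J g)‖ := hT _
    _ = C * ‖z • g - g'‖ := by rw [hTJ g g' hg', ← map_smul, ← map_sub, J.norm_map]
    _ ≤ C * ((2 * C)⁻¹ * ‖g‖) := by gcongr
    _ = 2⁻¹ * ‖g‖ := by field_simp
  have hg_pos : 0 < ‖g‖ := by
    have : 0 < μ.real t := ENNReal.toReal_pos htpos.ne' htfin.ne
    rw [hg, norm_indicatorConstLp' (zero_lt_one.trans_le Fact.out).ne' htpos.ne', norm_one, one_mul]
    positivity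
  linarith

theorem ae_mem_spectrum_of_intertwining (hu : AEMeasurable u μ) (J : Lp 𝕜 p μ →ₗᵢ[𝕜] E)
    (hTJ : ∀ g g' : Lp 𝕜 p μ, (g' =ᵐ[μ] fun x => u x * g x) → T (J g) = J g') :
    ∀ᵐ x ∂μ, u x ∈ spectrum 𝕜 T := by
  have hnull : μ.map u (spectrum 𝕜 T)ᶜ = 0 := by
    refine measure_null_of_locally_null _ fun z hz => ?_
    obtain ⟨C, hC, hT⟩ := exists_norm_le_mul_norm_smul_sub_of_notMem_spectrum hz
    refine ⟨Metric.ball z (2 * C)⁻¹,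
      mem_nhdsWithin_of_mem_nhds (Metric.ball_mem_nhds z (by positivity)), ?_⟩
    rw [Measure.map_apply_of_aemeasurable hu measurableSet_ball]
    exact measure_preimage_ball_eq_zero_of_norm_le_mul hu J hTJ hC hT
  exact ae_of_ae_map hu hnull

end Spectrum

section Tensor

variable {𝕜 α β : Type*} [RCLike 𝕜] [MeasurableSpace α] [MeasurableSpace β] {μ : Measure α}
  {ν : Measure β} [SFinite ν] {p : ℝ≥0∞}

lemma eLpNorm_fst_mul_snd {g : α → 𝕜} {e : β → 𝕜} (hp : p ≠ ∞) (hg : AEStronglyMeasurable g μ)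
    (he : AEStronglyMeasurable e ν) :
    eLpNorm (fun w : α × β => g w.1 * e w.2) p (μ.prod ν) = eLpNorm g p μ * eLpNorm e p ν := by
  rcases eq_or_ne p 0 with rfl | hp0
  · simp
  simp only [eLpNorm_eq_lintegral_rpow_enorm_toReal hp0 hp, enorm_mul,
    ENNReal.mul_rpow_of_nonneg _ _ ENNReal.toReal_nonneg]
  rw [lintegral_prod_mul (hg.enorm.pow_const _) (he.enorm.pow_const _),
    ENNReal.mul_rpow_of_nonneg _ _ (by positivity)]

lemma memLp_fst_mul_snd {g : α → 𝕜} {e : β → 𝕜} (hp : p ≠ ∞) (hg : MemLp g p μ)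
    (he : MemLp e p ν) : MemLp (fun w : α × β => g w.1 * e w.2) p (μ.prod ν) := by
  refine ⟨hg.1.comp_fst.mul he.1.comp_snd, ?_⟩
  rw [eLpNorm_fst_mul_snd hp hg.1 he.1]
  exact ENNReal.mul_lt_top hg.2 he.2

variable [Fact (1 ≤ p)]

/-- The isometry `g ↦ g ⊗ e` from `Lᵖ(μ)` into `Lᵖ(μ ⊗ ν)` attached to a function `e` of unit
`Lᵖ(ν)` norm; here `(g ⊗ e)(x, y) = g x * e y`. -/
def tensorRight (μ : Measure α) (hp : p ≠ ∞) {e : β → 𝕜} (he : MemLp e p ν)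
    (he1 : eLpNorm e p ν = 1) : Lp 𝕜 p μ →ₗᵢ[𝕜] Lp 𝕜 p (μ.prod ν) where
  toFun g := (memLp_fst_mul_snd hp (Lp.memLp g) he).toLp
  map_add' g g' := by
    rw [← MemLp.toLp_add]
    refine MemLp.toLp_congr _ _ ?_
    filter_upwards [Measure.quasiMeasurePreserving_fst.ae (Lp.coeFn_add g g')] with w hw
    rw [hw, Pi.add_apply, Pi.add_apply, add_mul]
  map_smul' c g := by
    rw [RingHom.id_apply, ← MemLp.toLp_const_smul]
    refine MemLp.toLp_congr _ _ ?_
    filter_upwards [Measure.quasiMeasurePreserving_fst.ae (Lp.coeFn_smul c g)] with w hw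
    rw [hw, Pi.smul_apply, Pi.smul_apply, smul_mul_assoc]
  norm_map' g := by
    simp [Lp.norm_def, eLpNorm_fst_mul_snd hp (Lp.aestronglyMeasurable g) he.1, he1,
      eLpNorm_congr_ae (MemLp.coeFn_toLp _)]

lemma coeFn_tensorRight (hp : p ≠ ∞) {e : β → 𝕜} (he : MemLp e p ν) (he1 : eLpNorm e p ν = 1)
    (g : Lp 𝕜 p μ) :
    tensorRight μ hp he he1 g =ᵐ[μ.prod ν] fun w => g w.1 * e w.2 :=
  (memLp_fst_mul_snd hp (Lp.memLp g) he).coeFn_toLp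

end Tensor

section PartialIntegral

/-- An orthonormal system in `L²(μ)`, given by representing functions. -/
structure IsL2Orthonormal {𝕜 α ι : Type*} [RCLike 𝕜] [MeasurableSpace α] [DecidableEq ι]
    (μ : Measure α) (φ : ι → α → 𝕜) : Prop where
  memLp (i : ι) : MemLp (φ i) 2 μ
  integral_star_mul (i j : ι) : ∫ x, star (φ i x) * φ j x ∂μ = if i = j then 1 else 0

namespace IsL2Orthonormal

variable {𝕜 α ι : Type*} [RCLike 𝕜] [MeasurableSpace α] [DecidableEq ι] {μ : Measure α}
  {φ : ι → α → 𝕜}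

lemma eLpNorm_eq_one (hφ : IsL2Orthonormal μ φ) (i : ι) : eLpNorm (φ i) 2 μ = 1 := by
  have hnorm : ∫ x, ‖φ i x‖ ^ 2 ∂μ = 1 := by
    have h := hφ.integral_star_mul i i
    simp only [RCLike.star_def, RCLike.conj_mul, if_true] at h
    exact_mod_cast h
  simp [(hφ.memLp i).eLpNorm_eq_integral_rpow_norm two_ne_zero ENNReal.ofNat_ne_top, hnorm]

lemma integrable_star_mul (hφ : IsL2Orthonormal μ φ) (i j : ι) :
    Integrable (fun x => star (φ i x) * φ j x) μ :=
  (hφ.memLp i).star.integrable_mul (hφ.memLp j)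

lemma integrable_mul_star (hφ : IsL2Orthonormal μ φ) (i j : ι) :
    Integrable (fun x => φ i x * star (φ j x)) μ :=
  (hφ.memLp i).integrable_mul (hφ.memLp j).star

lemma integral_mul_star (hφ : IsL2Orthonormal μ φ) (i j : ι) :
    ∫ x, φ i x * star (φ j x) ∂μ = if i = j then 1 else 0 := by
  simp_rw [mul_comm (φ i _), hφ.integral_star_mul, eq_comm]

lemma integral_sum_mul_star_mul [Fintype ι] (hφ : IsL2Orthonormal μ φ) (c : ι → 𝕜) (j : ι) :
    ∫ x, (∑ k, c k * star (φ k x)) * φ j x ∂μ = c j := by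
  simp_rw [Finset.sum_mul, mul_assoc]
  rw [integral_finsetSum _ fun k _ => (hφ.integrable_star_mul k j).const_mul (c k)]
  simp only [integral_const_mul, hφ.integral_star_mul, mul_ite, mul_one, mul_zero,
    Finset.sum_ite_eq', Finset.mem_univ, if_true]

end IsL2Orthonormal

variable {𝕜 α β X ι : Type*} [RCLike 𝕜] [MeasurableSpace α] [MeasurableSpace β]
  [MeasurableSpace X] [Fintype ι] [DecidableEq ι] {μ : Measure α} {ν : Measure β} [SFinite ν]
  {ρ : Measure X} {u : ι → α → 𝕜} {φ : ι → β → 𝕜}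

lemma integral_kernel_mul_ae_eq (hφ : IsL2Orthonormal ν φ) {f : α × β → 𝕜} {g : α → 𝕜} {j : ι}
    (hf : f =ᵐ[μ.prod ν] fun w => g w.1 * φ j w.2) :
    ∀ᵐ w ∂μ.prod ν, ∫ t, (∑ k, u k w.1 * φ k w.2 * star (φ k t)) * f (w.1, t) ∂ν =
      u j w.1 * g w.1 * φ j w.2 := by
  filter_upwards [Measure.quasiMeasurePreserving_fst.ae (Measure.ae_ae_of_ae_prod hf)] with w hw
  calc ∫ t, (∑ k, u k w.1 * φ k w.2 * star (φ k t)) * f (w.1, t) ∂ν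
      = ∫ t, g w.1 * ((∑ k, u k w.1 * φ k w.2 * star (φ k t)) * φ j t) ∂ν :=
        integral_congr_ae <| hw.mono fun t ht => by
          simp only [ht]
          ring
    _ = u j w.1 * g w.1 * φ j w.2 := by
        rw [integral_const_mul, hφ.integral_sum_mul_star_mul (fun k => u k w.1 * φ k w.2)]
        ring

/- The measure-preserving equivalence `Φ` lets the integration run over either factor of a product:
take the identity or the exchange of coordinates. -/
theorem ae_mem_spectrum_of_partialIntegral [SigmaFinite μ] {Φ : X ≃ᵐ α × β}
    (hΦ : MeasurePreserving Φ ρ (μ.prod ν)) (hφ : IsL2Orthonormal ν φ)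
    {T : Lp 𝕜 2 ρ →L[𝕜] Lp 𝕜 2 ρ}
    (hT : ∀ f : Lp 𝕜 2 ρ, ∀ᵐ w ∂ρ, T f w =
      ∫ t, (∑ k, u k (Φ w).1 * φ k (Φ w).2 * star (φ k t)) * f (Φ.symm ((Φ w).1, t)) ∂ν)
    {j : ι} (hu : AEMeasurable (u j) μ) :
    ∀ᵐ x ∂μ, u j x ∈ spectrum 𝕜 T := by
  let J : Lp 𝕜 2 μ →ₗᵢ[𝕜] Lp 𝕜 2 ρ := (Lp.compMeasurePreservingₗᵢ 𝕜 Φ hΦ).comp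
    (tensorRight μ ENNReal.ofNat_ne_top (hφ.memLp j) (hφ.eLpNorm_eq_one j))
  have hJ : ∀ g, ∀ᵐ w ∂ρ, J g w = g (Φ w).1 * φ j (Φ w).2 := fun g => by
    filter_upwards [Lp.coeFn_compMeasurePreserving (tensorRight μ ENNReal.ofNat_ne_top
      (hφ.memLp j) (hφ.eLpNorm_eq_one j) g) hΦ, hΦ.quasiMeasurePreserving.ae (coeFn_tensorRight
      ENNReal.ofNat_ne_top (hφ.memLp j) (hφ.eLpNorm_eq_one j) g)] with w hw htensor
    exact hw.trans htensor
  refine ae_mem_spectrum_of_intertwining hu J fun g g' hg' => Lp.ext ?_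
  have hJsymm : (fun v => J g (Φ.symm v)) =ᵐ[μ.prod ν] fun v => g v.1 * φ j v.2 := by
    filter_upwards [(hΦ.symm Φ).quasiMeasurePreserving.ae (hJ g)] with v hv
    simpa using hv
  filter_upwards [hT (J g), hJ g', hΦ.quasiMeasurePreserving.ae
      (integral_kernel_mul_ae_eq (u := u) hφ hJsymm), hΦ.quasiMeasurePreserving.ae
      (Measure.quasiMeasurePreserving_fst.ae hg')] with w hTw hJw hint hgw
  rw [hTw, hint, hJw, hgw]

end PartialIntegral

section CauchyTransform

lemma exists_pos_forall_mem_ball_le_norm_sub {E : Type*} [SeminormedAddCommGroup E] {K : Set E}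
    (hK : IsClosed K) {z : E} (hz : z ∉ K) :
    ∃ ε > 0, ∀ w ∈ Metric.ball z ε, ∀ k ∈ K, ε ≤ ‖w - k‖ := by
  obtain ⟨ε, hε, hball⟩ := Metric.isOpen_iff.1 hK.isOpen_compl z hz
  refine ⟨ε / 2, half_pos hε, fun w hw k hk => ?_⟩
  have hzk : ε ≤ dist k z := not_lt.1 fun hlt => hball hlt hk
  have := dist_triangle k w z
  rw [← dist_eq_norm, dist_comm]
  linarith [Metric.mem_ball.1 hw]

variable {𝕜 α : Type*} [RCLike 𝕜] [MeasurableSpace α] {μ : Measure α} {u : α → 𝕜} {K : Set 𝕜}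

lemma integrable_inv_sub_mul (hu : AEMeasurable u μ) (hK : IsClosed K) (huK : ∀ᵐ x ∂μ, u x ∈ K)
    {g : α → 𝕜} (hg : Integrable g μ) {z : 𝕜} (hz : z ∉ K) :
    Integrable (fun x => (z - u x)⁻¹ * g x) μ := by
  obtain ⟨ε, hε, hgap⟩ := exists_pos_forall_mem_ball_le_norm_sub hK hz
  refine hg.bdd_mul (c := ε⁻¹) (hu.const_sub z).inv.aestronglyMeasurable ?_
  filter_upwards [huK] with x hx
  rw [norm_inv]
  gcongr
  exact hgap z (Metric.mem_ball_self hε) _ hx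

lemma differentiableOn_integral_inv_sub_mul (hu : AEMeasurable u μ) (hK : IsClosed K)
    (huK : ∀ᵐ x ∂μ, u x ∈ K) {g : α → 𝕜} (hg : Integrable g μ) :
    DifferentiableOn 𝕜 (fun z => ∫ x, (z - u x)⁻¹ * g x ∂μ) Kᶜ := by
  intro z hz
  obtain ⟨ε, hε, hgap⟩ := exists_pos_forall_mem_ball_le_norm_sub hK hz
  refine (hasDerivAt_integral_of_dominated_loc_of_deriv_le
    (F' := fun w x => -((w - u x) ^ 2)⁻¹ * g x) (bound := fun x => (ε ^ 2)⁻¹ * ‖g x‖)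
    (Metric.ball_mem_nhds z hε) ?_ (integrable_inv_sub_mul hu hK huK hg hz) ?_ ?_
    (hg.norm.const_mul _) ?_).2.differentiableAt.differentiableWithinAt
  · exact Filter.Eventually.of_forall fun w =>
      (hu.const_sub w).inv.aestronglyMeasurable.mul hg.aestronglyMeasurable
  · exact ((hu.const_sub z).pow_const 2).inv.neg.aestronglyMeasurable.mul hg.aestronglyMeasurable
  · filter_upwards [huK] with x hx w hw
    rw [norm_mul, norm_neg, norm_inv, norm_pow]
    gcongr
    exact hgap w hw _ hx
  · filter_upwards [huK] with x hx w hw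
    have hne : w - u x ≠ 0 := norm_pos_iff.1 (hε.trans_le (hgap w hw _ hx))
    simpa [neg_div] using (((hasDerivAt_id w).sub_const (u x)).fun_inv hne).mul_const (g x)

/-- The matrix element `⟨e', M (z - M)⁻¹ e⟩` of the operator `M` of multiplication by `u`
in `L²(μ)`. -/
def resolventPairing (μ : Measure α) (u e e' : α → 𝕜) (z : 𝕜) : 𝕜 :=
  ∫ x, u x / (z - u x) * e x * star (e' x) ∂μ

lemma div_sub_mul_eq {F : Type*} [Field F] {a z : F} (h : a ≠ z) (c : F) :
    a / (z - a) * c = z * ((z - a)⁻¹ * c) - c := by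
  have : z - a ≠ 0 := sub_ne_zero.2 h.symm
  field_simp
  ring

lemma integrable_div_sub_mul (hu : AEMeasurable u μ) (hK : IsClosed K) (huK : ∀ᵐ x ∂μ, u x ∈ K)
    {g : α → 𝕜} (hg : Integrable g μ) {z : 𝕜} (hz : z ∉ K) :
    Integrable (fun x => u x / (z - u x) * g x) μ := by
  refine (((integrable_inv_sub_mul hu hK huK hg hz).const_mul z).sub hg).congr ?_
  filter_upwards [huK] with x hx
  exact (div_sub_mul_eq (ne_of_mem_of_not_mem hx hz) _).symm

lemma differentiableOn_resolventPairing {e e' : α → 𝕜} (hu : AEMeasurable u μ) (hK : IsClosed K)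
    (huK : ∀ᵐ x ∂μ, u x ∈ K) (hee' : Integrable (fun x => e x * star (e' x)) μ) :
    DifferentiableOn 𝕜 (resolventPairing μ u e e') Kᶜ := by
  refine ((differentiableOn_id.mul (differentiableOn_integral_inv_sub_mul hu hK huK hee')).sub_const
    (∫ x, e x * star (e' x) ∂μ)).congr fun z hz => ?_
  have hint := (integrable_inv_sub_mul hu hK huK hee' hz).const_mul z
  simp only [resolventPairing, Pi.mul_apply, id, mul_assoc]
  rw [← integral_const_mul, ← integral_sub hint hee']
  refine integral_congr_ae (huK.mono fun x hx => ?_)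
  exact div_sub_mul_eq (ne_of_mem_of_not_mem hx hz) _

end CauchyTransform

section KernelDet

lemma differentiableOn_det {𝕜 E A ι : Type*} [NontriviallyNormedField 𝕜] [NormedAddCommGroup E]
    [NormedSpace 𝕜 E] [NormedCommRing A] [NormedAlgebra 𝕜 A] [Fintype ι] [DecidableEq ι]
    {M : E → Matrix ι ι A} {U : Set E} (hM : ∀ i j, DifferentiableOn 𝕜 (fun z => M z i j) U) :
    DifferentiableOn 𝕜 (fun z => (M z).det) U := by
  simp_rw [Matrix.det_apply]
  exact fun z hz => DifferentiableWithinAt.fun_sum fun σ _ => (HasFDerivWithinAt.finsetProd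
    fun i _ => (hM (σ i) i z hz).hasFDerivWithinAt).differentiableWithinAt.const_smul _

variable {𝕜 α β ι κ : Type*} [RCLike 𝕜] [MeasurableSpace β] [Fintype κ]

/-- The function `F_ω(x, y; z)`, `ω = (k, j)`, its integrals over `ξ` being written as resolvent
pairings. -/
def kernelF (ν : Measure β) (φ : ι → α → 𝕜) (h : ι → β → 𝕜) (ψ : κ → β → 𝕜) (p : κ → α → 𝕜)
    (ω : κ × ι) (x : α) (y : β) (z : 𝕜) : 𝕜 :=
  φ ω.2 x * (ψ ω.1 y * h ω.2 y / (z - h ω.2 y) +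
    ∑ i, (p i x * ψ i y / (z - p i x)) * resolventPairing ν (h ω.2) (ψ ω.1) (ψ i) z)

/-- The function `B_ω(s, t)`, `ω = (k, j)`, against which the functions `F_ω'` are integrated. -/
def kernelB (φ : ι → α → 𝕜) (ψ : κ → β → 𝕜) (p : κ → α → 𝕜) (ω : κ × ι) (s : α) (t : β) : 𝕜 :=
  p ω.1 s * star (φ ω.2 s) * star (ψ ω.1 t)

variable [DecidableEq κ] {ν : Measure β} {φ : ι → α → 𝕜} {h : ι → β → 𝕜} {ψ : κ → β → 𝕜}
  {p : κ → α → 𝕜}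

/- Orthonormality of `ψ` leaves only the term `i = k'` of the sum defining `F_(k, j)`, and
`p + p * (p / (z - p)) = z * (p / (z - p))`. -/
lemma integral_kernelF_mul_kernelB (hψ : IsL2Orthonormal ν ψ) {ω ω' : κ × ι} {x : α} {z : 𝕜}
    (hint : Integrable
      (fun y => h ω.2 y / (z - h ω.2 y) * (ψ ω.1 y * star (ψ ω'.1 y))) ν)
    (hp : p ω'.1 x ≠ z) :
    ∫ y, kernelF ν φ h ψ p ω x y z * kernelB φ ψ p ω' x y ∂ν =
      z * resolventPairing ν (h ω.2) (ψ ω.1) (ψ ω'.1) z *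
        (p ω'.1 x / (z - p ω'.1 x) * φ ω.2 x * star (φ ω'.2 x)) := by
  set H : κ → 𝕜 := fun i => resolventPairing ν (h ω.2) (ψ ω.1) (ψ i) z with hH
  set a : 𝕜 := φ ω.2 x * (p ω'.1 x * star (φ ω'.2 x)) with ha
  have hexpand : ∀ y, kernelF ν φ h ψ p ω x y z * kernelB φ ψ p ω' x y =
      a * (h ω.2 y / (z - h ω.2 y) * (ψ ω.1 y * star (ψ ω'.1 y))) +
        ∑ i, (a * (p i x / (z - p i x)) * H i) * (ψ i y * star (ψ ω'.1 y)) := fun y => by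
    rw [kernelF, kernelB, mul_add, add_mul, Finset.mul_sum, Finset.sum_mul]
    congr 1
    · ring
    · exact Finset.sum_congr rfl fun i _ => by ring
  have hsum : ∀ i ∈ Finset.univ, Integrable
      (fun y => (a * (p i x / (z - p i x)) * H i) * (ψ i y * star (ψ ω'.1 y))) ν :=
    fun i _ => (hψ.integrable_mul_star i ω'.1).const_mul _
  have hz : z - p ω'.1 x ≠ 0 := sub_ne_zero.2 hp.symm
  calc ∫ y, kernelF ν φ h ψ p ω x y z * kernelB φ ψ p ω' x y ∂ν
      = a * H ω'.1 + a * (p ω'.1 x / (z - p ω'.1 x)) * H ω'.1 := by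
        simp_rw [hexpand]
        rw [integral_add (hint.const_mul a) (integrable_finsetSum _ hsum),
          integral_finsetSum _ hsum]
        simp only [integral_const_mul, hψ.integral_mul_star, mul_ite, mul_one, mul_zero,
          Finset.sum_ite_eq', Finset.mem_univ, if_true, hH, resolventPairing, mul_assoc]
    _ = z * H ω'.1 * (p ω'.1 x / (z - p ω'.1 x) * φ ω.2 x * star (φ ω'.2 x)) := by
        rw [ha]
        field_simp
        ring

variable [MeasurableSpace α]

/-- The matrix `Π(z)` of the pairings of the functions `F_ω` with the functions `B_ω'`. -/
def kernelMatrix (μ : Measure α) (ν : Measure β) (φ : ι → α → 𝕜) (h : ι → β → 𝕜) (ψ : κ → β → 𝕜)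
    (p : κ → α → 𝕜) (z : 𝕜) : Matrix (κ × ι) (κ × ι) 𝕜 :=
  Matrix.of fun ω ω' => ∫ x, ∫ y, kernelF ν φ h ψ p ω x y z * kernelB φ ψ p ω' x y ∂ν ∂μ

variable {μ : Measure α} {K L : Set 𝕜}

theorem kernelMatrix_apply_eq (hψ : IsL2Orthonormal ν ψ) (hK : IsClosed K)
    {ω ω' : κ × ι} (hh : AEMeasurable (h ω.2) ν) (hhK : ∀ᵐ y ∂ν, h ω.2 y ∈ K) {z : 𝕜}
    (hz : z ∉ K) (hp : ∀ᵐ x ∂μ, p ω'.1 x ≠ z) :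
    kernelMatrix μ ν φ h ψ p z ω ω' =
      z * resolventPairing ν (h ω.2) (ψ ω.1) (ψ ω'.1) z *
        resolventPairing μ (p ω'.1) (φ ω.2) (φ ω'.2) z := by
  rw [kernelMatrix, Matrix.of_apply, resolventPairing.eq_def μ, ← integral_const_mul]
  exact integral_congr_ae <| hp.mono fun x hx => integral_kernelF_mul_kernelB hψ
    (integrable_div_sub_mul hh hK hhK (hψ.integrable_mul_star _ _) hz) hx

lemma differentiableOn_kernelMatrix_apply [DecidableEq ι] (hφ : IsL2Orthonormal μ φ)
    (hψ : IsL2Orthonormal ν ψ) (hK : IsClosed K) (hL : IsClosed L) {ω ω' : κ × ι}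
    (hh : AEMeasurable (h ω.2) ν) (hhK : ∀ᵐ y ∂ν, h ω.2 y ∈ K)
    (hp : AEMeasurable (p ω'.1) μ) (hpL : ∀ᵐ x ∂μ, p ω'.1 x ∈ L) :
    DifferentiableOn 𝕜 (fun z => kernelMatrix μ ν φ h ψ p z ω ω') (K ∪ L)ᶜ := by
  rw [Set.compl_union]
  have hH := differentiableOn_resolventPairing hh hK hhK (hψ.integrable_mul_star ω.1 ω'.1)
  have hP := differentiableOn_resolventPairing hp hL hpL (hφ.integrable_mul_star ω.2 ω'.2)
  refine ((differentiableOn_id.mul (hH.mono Set.inter_subset_left)).mul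
    (hP.mono Set.inter_subset_right)).congr fun z hz => ?_
  exact kernelMatrix_apply_eq hψ hK hh hhK hz.1 <|
    hpL.mono fun x hx => ne_of_mem_of_not_mem hx hz.2

theorem statement17_general [Fintype ι] [DecidableEq ι] [SigmaFinite μ] [SigmaFinite ν]
    (hφ : IsL2Orthonormal μ φ) (hψ : IsL2Orthonormal ν ψ)
    (hh : ∀ j, AEMeasurable (h j) ν) (hp : ∀ k, AEMeasurable (p k) μ)
    {T₁ T₂ : Lp 𝕜 2 (μ.prod ν) →L[𝕜] Lp 𝕜 2 (μ.prod ν)}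
    (hT₁ : ∀ f : Lp 𝕜 2 (μ.prod ν), ∀ᵐ w ∂μ.prod ν,
      T₁ f w = ∫ s, (∑ j, φ j w.1 * star (φ j s) * h j w.2) * f (s, w.2) ∂μ)
    (hT₂ : ∀ f : Lp 𝕜 2 (μ.prod ν), ∀ᵐ w ∂μ.prod ν,
      T₂ f w = ∫ t, (∑ k, p k w.1 * ψ k w.2 * star (ψ k t)) * f (w.1, t) ∂ν) :
    DifferentiableOn 𝕜 (fun z => (kernelMatrix μ ν φ h ψ p z - Matrix.diagonal fun _ => z).det)
      (spectrum 𝕜 T₁ ∪ spectrum 𝕜 T₂)ᶜ := by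
  have hh_mem : ∀ j, ∀ᵐ y ∂ν, h j y ∈ spectrum 𝕜 T₁ := fun j =>
    ae_mem_spectrum_of_partialIntegral (Φ := MeasurableEquiv.prodComm)
      Measure.measurePreserving_swap hφ
      (by simp only [mul_rotate (h _ _)]; exact hT₁) (hh j)
  have hp_mem : ∀ k, ∀ᵐ x ∂μ, p k x ∈ spectrum 𝕜 T₂ := fun k =>
    ae_mem_spectrum_of_partialIntegral (Φ := MeasurableEquiv.refl _) (.id _) hψ hT₂ (hp k)
  refine differentiableOn_det fun ω ω' => ?_
  refine (differentiableOn_kernelMatrix_apply hφ hψ (spectrum.isClosed T₁) (spectrum.isClosed T₂)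
    (hh ω.2) (hh_mem ω.2) (hp ω'.1) (hp_mem ω'.1)).sub ?_
  simp only [Matrix.diagonal_apply]
  split_ifs
  exacts [differentiableOn_id, differentiableOn_const _]

end KernelDet

theorem statement17
    (a b c d : ℝ) (hab : a < b) (hcd : c < d)
    (n : ℕ) (hn : 1 ≤ n)
    (φ : Fin n → ℝ → ℂ)
    (hφL2 : ∀ k, MemLp (φ k) 2 (muI a b))
    (hφON : ∀ i j, ∫ x, star (φ i x) * φ j x ∂(muI a b) = if i = j then 1 else 0)
    (h : Fin n → ℝ → ℝ)
    (hhmeas : ∀ k, Measurable (h k))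
    (hhbdd : ∀ k, ∃ C : ℝ, ∀ᵐ y ∂(muI c d), |h k y| ≤ C)
    (m : ℕ) (hm : 1 ≤ m)
    (ψ : Fin m → ℝ → ℂ)
    (hψL2 : ∀ j, MemLp (ψ j) 2 (muI c d))
    (hψON : ∀ i j, ∫ y, star (ψ i y) * ψ j y ∂(muI c d) = if i = j then 1 else 0)
    (p : Fin m → ℝ → ℝ)
    (hpmeas : ∀ j, Measurable (p j))
    (hpbdd : ∀ j, ∃ C : ℝ, ∀ᵐ x ∂(muI a b), |p j x| ≤ C)
    (T1 T2 : Lp ℂ 2 ((muI a b).prod (muI c d)) →L[ℂ] Lp ℂ 2 ((muI a b).prod (muI c d)))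
    (hT1sa : IsSelfAdjoint T1) (hT2sa : IsSelfAdjoint T2)
    (hT1 : ∀ f : Lp ℂ 2 ((muI a b).prod (muI c d)),
      ∀ᵐ z ∂((muI a b).prod (muI c d)),
        T1 f z = ∫ s, (∑ k, φ k z.1 * star (φ k s) * (h k z.2 : ℂ)) * f (s, z.2) ∂(muI a b))
    (hT2 : ∀ f : Lp ℂ 2 ((muI a b).prod (muI c d)),
      ∀ᵐ z ∂((muI a b).prod (muI c d)),
        T2 f z = ∫ t, (∑ j, (p j z.1 : ℂ) * ψ j z.2 * star (ψ j t)) * f (z.1, t) ∂(muI c d))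
    -- the functions F_ω(x, y; z) for ω = (k, j) ∈ Γ = {1,…,m} × {1,…,n}
    (F : Fin m × Fin n → ℝ → ℝ → ℂ → ℂ)
    (hF : ∀ ω x y, ∀ z : ℂ, z ∉ spectrum ℂ T1 ∪ spectrum ℂ T2 → F ω x y z =
      φ ω.2 x * (ψ ω.1 y * (h ω.2 y : ℂ) / (z - (h ω.2 y : ℂ)) +
        ∑ i, ((p i x : ℂ) * ψ i y / (z - (p i x : ℂ))) *
          ∫ ξ, ((h ω.2 ξ : ℂ) / (z - (h ω.2 ξ : ℂ))) * ψ ω.1 ξ * star (ψ i ξ) ∂(muI c d)))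
    -- the functions B_ω(s, t)
    (B : Fin m × Fin n → ℝ → ℝ → ℂ)
    (hB : ∀ ω s t, B ω s t = (p ω.1 s : ℂ) * star (φ ω.2 s) * star (ψ ω.1 t))
    -- the functions Π_{ω,ω'}(z)
    (Pmat : ℂ → Fin m × Fin n → Fin m × Fin n → ℂ)
    (hPmat : ∀ z ω ω', Pmat z ω ω' =
      ∫ x, (∫ y, F ω x y z * B ω' x y ∂(muI c d)) ∂(muI a b))
    -- the function Δ(z)
    (Δ : ℂ → ℂ)
    (hΔ : ∀ z, Δ z = Matrix.det
      (Matrix.of fun ω ω' : Fin m × Fin n => Pmat z ω ω' - if ω = ω' then z else 0)) :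
    DifferentiableOn ℂ Δ ((spectrum ℂ T1 ∪ spectrum ℂ T2)ᶜ) := by
  refine (statement17_general (h := fun k y => (h k y : ℂ)) (p := fun j x => (p j x : ℂ))
    ⟨hφL2, hφON⟩ ⟨hψL2, hψON⟩ (by fun_prop) (by fun_prop) hT1 hT2).congr fun z hz => ?_
  simp only [hΔ, hPmat, hF _ _ _ z hz, hB]
  congr 1
end
end
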